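/- Let a and b be distinct positive integers and let Λ = (λ_n)_{n≥1} be a sequence of positive integers. Let α_Λ = [0; ā^{λ₁}, b̄^{λ₂}, ā^{λ₃}, …, b̄^{λ_{2n}}, ā^{λ_{2n+1}}, …] be the continued fraction whose sequence of partial quotients consists of λ₁ copies of a, followed by λ₂ copies of b, followed by λ₃ copies of a, and so on alternately. If liminf_{n→∞} λ_{n+1}/λ_n > √2, then α_Λ is transcendental. -/

import Mathlib

open Filter Topology

/-- Numerators of the convergents of `[0; t 1, t 2, ...]`. -/
def cfNum (t : ℕ → ℕ) : ℕ → ℕ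
  | 0 => 0
  | 1 => 1
  | n + 2 => t (n + 2) * cfNum t (n + 1) + cfNum t n

/-- Denominators of the convergents of `[0; t 1, t 2, ...]`. -/
def cfDen (t : ℕ → ℕ) : ℕ → ℕ
  | 0 => 1
  | 1 => t 1
  | n + 2 => t (n + 2) * cfDen t (n + 1) + cfDen t n

/-!
Let a block `a, a, …, a` of length `l` follow the partial quotient `t s ≠ a`, let `ω > 1` and `ω'`
be the roots of `x ^ 2 - a * x - 1`, and let `p' / q'`, `p / q` be the convergents of index
`s - 1` and `s`. Continuing the block forever gives the approximation
`(p * ω + p') / (q * ω + q')` to `α`, for which `|p * ω + p' - α * (q * ω + q')|` is at most a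
constant times `q⁻¹ * ω ^ (-l)`, while at the conjugate place `|p * ω' + p' - α * (q * ω' + q')|`
is still of order `q⁻¹`. If `s ≤ K * l`, then `log q` is at most a constant times `l`, so that the
product of these two quantities is of order at most `q ^ (-2 - 2 * κ)` for some `κ > 0`. Since
numerator and denominator lie in the order `ℤ[ω]`, whose nonzero elements have norm at least `1`,
Roth's theorem over `ℚ(ω)` with both real places rules out infinitely many such approximations to
an algebraic `α`.

If `liminf λ_{n+1} / λ_n > r > 1`, then the block lengths grow at least geometrically, so every
block is longer than a fixed multiple of everything before it.

The mechanism of Roth's theorem is the following. An auxiliary polynomial `P` with integer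
coefficients has large index at `(α, …, α)`. By Roth's lemma its index at the point formed by the
approximations is small, so some derivative of small order does not vanish there; the norm of its
value is at least `1`, and yet small because both conjugates are. Roth's lemma sees the heights of
the approximations only through the leading coefficients of their minimal polynomials, that is the
norm of `q * ω + q'`; it is at least `q` because `t s ≠ a`.
-/

namespace TwoPlaceRoth

open MvPolynomial

section HasseDerivative

variable {σ R : Type*} [CommSemiring R]

/-- The Taylor expansion `f(X) ↦ f(X + Y)`, as a polynomial in `Y` whose coefficients are
polynomials in `X`. -/
noncomputable def taylorExpansion :
    MvPolynomial σ R →ₐ[R] MvPolynomial σ (MvPolynomial σ R) :=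
  aeval fun j ↦ C (X j) + X j

/-- The Hasse derivative `(∏ j, (i j)!)⁻¹ ∏ j, (∂ / ∂ X j) ^ i j`, defined over any commutative
semiring as the coefficient of `Y ^ i` in `f(X + Y)`. -/
noncomputable def mvHasseDeriv (i : σ →₀ ℕ) : MvPolynomial σ R →ₗ[R] MvPolynomial σ R :=
  (lcoeff (MvPolynomial σ R) i).restrictScalars R ∘ₗ taylorExpansion.toLinearMap

/-- The translation `f(X) ↦ f(X + x)`. -/
noncomputable def translate (x : σ → R) : MvPolynomial σ R →ₐ[R] MvPolynomial σ R :=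
  aeval fun j ↦ X j + C (x j)

lemma mvHasseDeriv_apply (i : σ →₀ ℕ) (f : MvPolynomial σ R) :
    mvHasseDeriv i f = coeff i (taylorExpansion f) :=
  rfl

lemma taylorExpansion_C (r : R) :
    taylorExpansion (C r : MvPolynomial σ R) = C (C r) := by
  simp [taylorExpansion, MvPolynomial.algebraMap_apply]

lemma taylorExpansion_X (j : σ) :
    taylorExpansion (X j : MvPolynomial σ R) = C (X j) + X j := by
  simp [taylorExpansion]

lemma translate_X (x : σ → R) (j : σ) : translate x (X j) = X j + C (x j) := by
  simp [translate]

lemma taylorExpansion_translate (x : σ → R) (f : MvPolynomial σ R) :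
    taylorExpansion (translate x f) =
      map (translate x : MvPolynomial σ R →+* MvPolynomial σ R) (taylorExpansion f) := by
  induction f using MvPolynomial.induction_on with
  | C r => simp
  | add p q hp hq => simp only [map_add, hp, hq]
  | mul_X p j hp =>
    simp only [map_mul, hp, translate_X, taylorExpansion_X, map_add, taylorExpansion_C, map_C,
      map_X, RingHom.coe_coe]
    ring

lemma translate_mvHasseDeriv (x : σ → R) (i : σ →₀ ℕ) (f : MvPolynomial σ R) :
    translate x (mvHasseDeriv i f) = mvHasseDeriv i (translate x f) := by
  simp only [mvHasseDeriv_apply, taylorExpansion_translate, coeff_map, RingHom.coe_coe]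

lemma map_eval_taylorExpansion (x : σ → R) (f : MvPolynomial σ R) :
    map (eval x) (taylorExpansion f) = translate x f := by
  induction f using MvPolynomial.induction_on with
  | C r => simp
  | add p q hp hq => simp only [map_add, hp, hq]
  | mul_X p j hp =>
    simp only [map_mul, hp, translate_X, taylorExpansion_X, map_add, map_C, map_X, eval_X]
    ring

lemma coeff_translate (x : σ → R) (i : σ →₀ ℕ) (f : MvPolynomial σ R) :
    coeff i (translate x f) = eval x (mvHasseDeriv i f) := by
  rw [← map_eval_taylorExpansion, coeff_map, mvHasseDeriv_apply]

lemma map_taylorExpansion {S : Type*} [CommSemiring S] (φ : R →+* S) (f : MvPolynomial σ R) :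
    map (map φ) (taylorExpansion f) = taylorExpansion (map φ f) := by
  induction f using MvPolynomial.induction_on with
  | C r => simp
  | add p q hp hq => simp only [map_add, hp, hq]
  | mul_X p j hp => simp only [map_mul, hp, taylorExpansion_X, map_add, map_C, map_X]

lemma map_mvHasseDeriv {S : Type*} [CommSemiring S] (φ : R →+* S) (i : σ →₀ ℕ)
    (f : MvPolynomial σ R) :
    map φ (mvHasseDeriv i f) = mvHasseDeriv i (map φ f) := by
  rw [mvHasseDeriv_apply, mvHasseDeriv_apply, ← map_taylorExpansion, coeff_map]

lemma taylorExpansion_monomial [Fintype σ] [DecidableEq σ] (k : σ →₀ ℕ) (r : R) :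
    taylorExpansion (monomial k r) =
      ∑ p ∈ Fintype.piFinset fun j ↦ Finset.range (k j + 1),
        monomial (Finsupp.equivFunOnFinite.symm p)
          (monomial (k - Finsupp.equivFunOnFinite.symm p) ((∏ j, (k j).choose (p j) : ℕ) * r)) := by
  have hk : monomial k r = C r * ∏ j, X j ^ k j := by
    rw [monomial_eq, Finsupp.prod_fintype _ _ fun _ ↦ pow_zero _]
  have hfactor (j : σ) : (C (X j) + X j : MvPolynomial σ (MvPolynomial σ R)) ^ k j =
      ∑ m ∈ Finset.range (k j + 1), C (((k j).choose m : MvPolynomial σ R) * X j ^ (k j - m)) *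
        X j ^ m := by
    rw [add_comm, add_pow]
    refine Finset.sum_congr rfl fun m _ ↦ ?_
    simp only [map_mul, map_pow, map_natCast]
    ring
  rw [hk, map_mul, map_prod, taylorExpansion_C]
  simp only [map_pow, taylorExpansion_X, hfactor, Finset.prod_univ_sum, Finset.mul_sum]
  refine Finset.sum_congr rfl fun p _ ↦ ?_
  rw [monomial_eq (s := Finsupp.equivFunOnFinite.symm p),
    monomial_eq (s := k - Finsupp.equivFunOnFinite.symm p),
    Finsupp.prod_fintype _ _ fun _ ↦ pow_zero _, Finsupp.prod_fintype _ _ fun _ ↦ pow_zero _,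
    Finset.prod_mul_distrib, ← map_prod, Finset.prod_mul_distrib, ← mul_assoc, ← map_mul]
  simp only [Finsupp.equivFunOnFinite_symm_apply_apply, Finsupp.coe_tsub, Pi.sub_apply, map_mul,
    Nat.cast_prod, map_prod, map_natCast]
  ring

lemma mvHasseDeriv_monomial [Fintype σ] (i k : σ →₀ ℕ) (r : R) :
    mvHasseDeriv i (monomial k r) = monomial (k - i) ((∏ j, (k j).choose (i j) : ℕ) * r) := by
  classical
  rw [mvHasseDeriv_apply, taylorExpansion_monomial, coeff_sum]
  simp only [coeff_monomial, Equiv.symm_apply_eq]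
  rw [Finset.sum_ite_eq']
  split_ifs with h
  · rw [← Finsupp.equivFunOnFinite.symm_apply_apply i]; rfl
  · obtain ⟨j, hj⟩ : ∃ j, k j < i j := by
      simpa [Fintype.mem_piFinset] using h
    rw [Finset.prod_eq_zero (Finset.mem_univ j) (Nat.choose_eq_zero_of_lt hj)]
    simp

lemma coeff_mvHasseDeriv [Fintype σ] (f : MvPolynomial σ R) (e i : σ →₀ ℕ) :
    coeff e (mvHasseDeriv i f) =
      (∏ j, (e j + i j).choose (i j) : ℕ) * coeff (e + i) f := by
  classical
  induction f using MvPolynomial.induction_on' with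
  | add p q hp hq => simp only [map_add, coeff_add, hp, hq, mul_add]
  | monomial k r =>
    rw [mvHasseDeriv_monomial, coeff_monomial, coeff_monomial]
    by_cases hk : k = e + i
    · simp [hk]
    rw [if_neg hk, mul_zero]
    split_ifs with hki
    · obtain ⟨j, hj⟩ : ∃ j, k j < i j := by
        by_contra! hle
        exact hk (by rw [← hki, tsub_add_cancel_of_le (Finsupp.le_def.2 hle)])
      rw [Finset.prod_eq_zero (Finset.mem_univ j) (Nat.choose_eq_zero_of_lt hj)]
      simp
    · rfl

lemma mvHasseDeriv_zero (f : MvPolynomial σ R) : mvHasseDeriv 0 f = f := by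
  rw [mvHasseDeriv_apply, ← constantCoeff_eq]
  induction f using MvPolynomial.induction_on with
  | C r => simp
  | add p q hp hq => simp only [map_add, hp, hq]
  | mul_X p j hp => simp [hp, taylorExpansion_X]

lemma pderiv_mvHasseDeriv [Finite σ] (f : MvPolynomial σ R) (i : σ →₀ ℕ) (j : σ) :
    pderiv j (mvHasseDeriv i f) =
      ((i j + 1 : ℕ) : MvPolynomial σ R) * mvHasseDeriv (i + Finsupp.single j 1) f := by
  classical
  cases nonempty_fintype σ
  ext e
  set δ : σ →₀ ℕ := Finsupp.single j 1 with hδ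
  have hδj : δ j = 1 := Finsupp.single_eq_same
  have hothers : ∏ k ∈ Finset.univ.erase j, ((e + δ) k + i k).choose (i k) =
      ∏ k ∈ Finset.univ.erase j, (e k + (i + δ) k).choose ((i + δ) k) :=
    Finset.prod_congr rfl fun k hk ↦ by simp [hδ, Finset.ne_of_mem_erase hk]
  have hchoose : ((e + δ) j + i j).choose (i j) * (e j + 1) =
      (i j + 1) * (e j + (i + δ) j).choose ((i + δ) j) := by
    simp only [Finsupp.coe_add, Pi.add_apply, hδj]
    have := Nat.choose_succ_right_eq (e j + 1 + i j) (i j)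
    rw [Nat.add_sub_cancel] at this
    rw [← this, add_right_comm, add_assoc, mul_comm]
  rw [coeff_pderiv, coeff_mvHasseDeriv, ← C_eq_coe_nat, coeff_C_mul, coeff_mvHasseDeriv,
    add_assoc, add_comm δ i, mul_right_comm, ← mul_assoc]
  congr 1
  norm_cast
  rw [← Finset.mul_prod_erase _ _ (Finset.mem_univ j), ← Finset.mul_prod_erase Finset.univ
    (fun k ↦ (e k + (i + δ) k).choose ((i + δ) k)) (Finset.mem_univ j), hothers, mul_right_comm,
    hchoose, mul_assoc]

end HasseDerivative

section GeneralizedWronskian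

lemma coeff_X_mul_pderiv {σ R : Type*} [CommSemiring R] (f : MvPolynomial σ R) (j : σ)
    (e : σ →₀ ℕ) : coeff e (X j * pderiv j f) = e j * coeff e f := by
  classical
  rw [coeff_X_mul']
  split_ifs with h
  · have hj : e j ≠ 0 := Finsupp.mem_support_iff.1 h
    have hle : Finsupp.single j 1 ≤ e := Finsupp.single_le_iff.2 (Nat.one_le_iff_ne_zero.2 hj)
    rw [coeff_pderiv, tsub_add_cancel_of_le hle, mul_comm, ← Nat.cast_add_one]
    congr 2
    simp only [Finsupp.coe_tsub, Pi.sub_apply, Finsupp.single_eq_same]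
    omega
  · rw [Finsupp.notMem_support_iff.1 h, Nat.cast_zero, zero_mul]

variable {K : Type*} [Field K] [CharZero K] {n : ℕ}

lemma degree_eq_of_mul_pderiv_eq (m : MonomialOrder (Fin n)) {f g : MvPolynomial (Fin n) K}
    (hf : f ≠ 0) (hg : g ≠ 0) (h : ∀ j, f * pderiv j g = g * pderiv j f) :
    m.degree f = m.degree g := by
  have hdeg (p : MvPolynomial (Fin n) K) (j : Fin n) :
      m.toSyn (m.degree (X j * pderiv j p)) ≤ m.toSyn (m.degree p) := by
    refine m.degree_le_iff.2 fun b hb ↦ m.le_degree ?_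
    rw [mem_support_iff, coeff_X_mul_pderiv] at hb
    exact mem_support_iff.2 (right_ne_zero_of_mul hb)
  have hlead : coeff (m.degree f) f * coeff (m.degree g) g ≠ 0 :=
    mul_ne_zero (m.leadingCoeff_ne_zero_iff.2 hf) (m.leadingCoeff_ne_zero_iff.2 hg)
  ext j
  have htop : coeff (m.degree f + m.degree g) (f * (X j * pderiv j g)) =
      coeff (m.degree g + m.degree f) (g * (X j * pderiv j f)) := by
    rw [mul_left_comm, h j, mul_left_comm, add_comm]
  rw [m.coeff_mul_of_add_of_degree_le le_rfl (hdeg g j),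
    m.coeff_mul_of_add_of_degree_le le_rfl (hdeg f j), coeff_X_mul_pderiv,
    coeff_X_mul_pderiv] at htop
  exact_mod_cast mul_left_cancel₀ hlead (by linear_combination -htop :
    coeff (m.degree f) f * coeff (m.degree g) g * (m.degree f j : K) =
      coeff (m.degree f) f * coeff (m.degree g) g * m.degree g j)

/-- The hypothesis says that all partial derivatives of the quotient `g / f` vanish. -/
lemma exists_eq_C_mul_of_mul_pderiv_eq {f g : MvPolynomial (Fin n) K} (hf : f ≠ 0)
    (h : ∀ j, f * pderiv j g = g * pderiv j f) : ∃ c : K, g = C c * f := by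
  let m : MonomialOrder (Fin n) := MonomialOrder.lex
  have hlead : coeff (m.degree f) f ≠ 0 := m.leadingCoeff_ne_zero_iff.2 hf
  set c := coeff (m.degree f) g / coeff (m.degree f) f with hc
  refine ⟨c, by_contra fun hne ↦ ?_⟩
  have hr : g - C c * f ≠ 0 := sub_ne_zero.2 hne
  have hrel (j : Fin n) : f * pderiv j (g - C c * f) = (g - C c * f) * pderiv j f := by
    simp only [map_sub, pderiv_C_mul]
    linear_combination h j
  apply m.leadingCoeff_ne_zero_iff.2 hr
  rw [MonomialOrder.leadingCoeff, ← degree_eq_of_mul_pderiv_eq m hf hr hrel, coeff_sub,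
    coeff_C_mul, hc, div_mul_cancel₀ _ hlead, sub_self]

/-- The generalized Wronskian matrix of the polynomials `φ k` for the orders of differentiation
`i r`. -/
noncomputable def wronskianMatrix {σ R ι κ : Type*} [CommSemiring R] (i : ι → σ →₀ ℕ)
    (φ : κ → MvPolynomial σ R) : Matrix ι κ (MvPolynomial σ R) :=
  Matrix.of fun r k ↦ mvHasseDeriv (i r) (φ k)

/-- The signed minors of the Wronskian matrix that arise from its expansion along an additional
last row. -/
noncomputable def wronskianCofactor {σ R : Type*} [CommRing R] {l : ℕ} (i : Fin l → σ →₀ ℕ)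
    (φ : Fin (l + 1) → MvPolynomial σ R) (k : Fin (l + 1)) : MvPolynomial σ R :=
  (-1) ^ (l + (k : ℕ)) * (wronskianMatrix i (φ ∘ k.succAbove)).det

lemma wronskianCofactor_last {σ R : Type*} [CommRing R] {l : ℕ} (i : Fin l → σ →₀ ℕ)
    (φ : Fin (l + 1) → MvPolynomial σ R) :
    wronskianCofactor i φ (Fin.last l) = (wronskianMatrix i (φ ∘ Fin.castSucc)).det := by
  rw [wronskianCofactor, Fin.succAbove_last, Fin.val_last, ← two_mul, pow_mul, neg_one_sq, one_pow,
    one_mul]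

lemma det_wronskianMatrix_snoc {σ R : Type*} [CommRing R] {l : ℕ} (i : Fin l → σ →₀ ℕ)
    (i' : σ →₀ ℕ) (φ : Fin (l + 1) → MvPolynomial σ R) :
    (wronskianMatrix (Fin.snoc i i' : Fin (l + 1) → σ →₀ ℕ) φ).det =
      ∑ k, wronskianCofactor i φ k * mvHasseDeriv i' (φ k) := by
  rw [Matrix.det_succ_row _ (Fin.last l)]
  refine Finset.sum_congr rfl fun k _ ↦ ?_
  have hminor : (wronskianMatrix (Fin.snoc i i' : Fin (l + 1) → σ →₀ ℕ) φ).submatrix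
      (Fin.last l).succAbove k.succAbove = wronskianMatrix i (φ ∘ k.succAbove) := by
    ext r s : 2
    simp [wronskianMatrix]
  rw [hminor, wronskianCofactor]
  simp only [wronskianMatrix, Matrix.of_apply, Fin.snoc_last, Fin.val_last]
  ring

lemma wronskianMatrix_mulVec_pderiv_eq_zero {σ R : Type*} [CommRing R] [Finite σ] {l : ℕ}
    {i : Fin l → σ →₀ ℕ} {φ g : Fin (l + 1) → MvPolynomial σ R} (hi : ∀ r, (i r).degree + 1 ≤ l)
    (hrel : ∀ i' : σ →₀ ℕ, i'.degree ≤ l → ∑ k, g k * mvHasseDeriv i' (φ k) = 0) (j : σ) :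
    (wronskianMatrix i (φ ∘ Fin.castSucc)).mulVec (fun k ↦
      g (Fin.last l) * pderiv j (g k.castSucc) - g k.castSucc * pderiv j (g (Fin.last l))) = 0 := by
  ext1 r
  have hsum : ∑ k, g k * mvHasseDeriv (i r) (φ k) = 0 := hrel _ (by have := hi r; omega)
  have hsum' : ∑ k, g k * mvHasseDeriv (i r + Finsupp.single j 1) (φ k) = 0 :=
    hrel _ (by rw [map_add, Finsupp.degree_single]; exact hi r)
  have hderiv : ∑ k, pderiv j (g k) * mvHasseDeriv (i r) (φ k) = 0 := by
    have h := congrArg (pderiv j) hsum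
    simp only [map_sum, pderiv_mul, pderiv_mvHasseDeriv, mul_left_comm (g _),
      Finset.sum_add_distrib, ← Finset.mul_sum, hsum', mul_zero, add_zero, map_zero] at h
    exact h
  have hdiff : ∑ k, (g (Fin.last l) * pderiv j (g k) - g k * pderiv j (g (Fin.last l))) *
      mvHasseDeriv (i r) (φ k) = 0 := by
    simp only [sub_mul, Finset.sum_sub_distrib, mul_assoc, mul_left_comm _ (pderiv j (g _)) _]
    simp only [mul_left_comm (pderiv j (g _)) (g (Fin.last l)), ← Finset.mul_sum, hderiv, hsum,
      mul_zero, sub_zero]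
  rw [Fin.sum_univ_castSucc, sub_self, zero_mul, add_zero] at hdiff
  rw [Pi.zero_apply, ← hdiff]
  simp only [Matrix.mulVec, dotProduct, wronskianMatrix, Matrix.of_apply, Function.comp_apply]
  exact Finset.sum_congr rfl fun k _ ↦ mul_comm _ _

/-- The relations among the `φ k` and their derivatives make the ratios of the `g k` constant, so
that the relation of order `0` becomes a linear dependence over `K`. -/
lemma eq_zero_of_sum_mul_mvHasseDeriv_eq_zero {l : ℕ} {i : Fin l → Fin n →₀ ℕ}
    {φ g : Fin (l + 1) → MvPolynomial (Fin n) K} (hφ : LinearIndependent K φ)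
    (hi : ∀ r, (i r).degree + 1 ≤ l) (hdet : (wronskianMatrix i (φ ∘ Fin.castSucc)).det ≠ 0)
    (hrel : ∀ i' : Fin n →₀ ℕ, i'.degree ≤ l → ∑ k, g k * mvHasseDeriv i' (φ k) = 0) :
    g (Fin.last l) = 0 := by
  set f := g (Fin.last l) with hf
  by_contra hf0
  have hratio (k : Fin (l + 1)) : ∃ c : K, g k = C c * f := by
    refine exists_eq_C_mul_of_mul_pderiv_eq hf0 fun j ↦ sub_eq_zero.1 ?_
    have hker := Matrix.eq_zero_of_mulVec_eq_zero hdet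
      (wronskianMatrix_mulVec_pderiv_eq_zero hi hrel j)
    induction k using Fin.lastCases with
    | last => rw [← hf, sub_self]
    | cast k => exact congrFun hker k
  choose c hc using hratio
  have hsum : f * ∑ k, c k • φ k = 0 := by
    have h := hrel 0 (by simp)
    simp only [mvHasseDeriv_zero] at h
    rw [← h, Finset.mul_sum]
    refine Finset.sum_congr rfl fun k _ ↦ ?_
    rw [hc k, smul_eq_C_mul]
    ring
  have hlast := Fintype.linearIndependent_iff.1 hφ c ((mul_eq_zero.1 hsum).resolve_left hf0)
    (Fin.last l)
  exact hf0 (by rw [hf, hc, hlast, C_0, zero_mul])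

theorem exists_det_wronskianMatrix_ne_zero {l : ℕ} (φ : Fin l → MvPolynomial (Fin n) K)
    (hφ : LinearIndependent K φ) :
    ∃ i : Fin l → Fin n →₀ ℕ, (∀ r, (i r).degree + 1 ≤ l) ∧ (wronskianMatrix i φ).det ≠ 0 := by
  induction l with
  | zero => exact ⟨fun _ ↦ 0, fun r ↦ r.elim0, by simp⟩
  | succ l ih =>
    obtain ⟨i, hi, hdet⟩ := ih (φ ∘ Fin.castSucc) (hφ.comp _ (Fin.castSucc_injective l))
    by_contra! hzero
    refine hdet ?_
    rw [← wronskianCofactor_last]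
    refine eq_zero_of_sum_mul_mvHasseDeriv_eq_zero hφ hi hdet fun i' hi' ↦ ?_
    rw [← det_wronskianMatrix_snoc]
    refine hzero _ fun r ↦ ?_
    induction r using Fin.lastCases with
    | last => simpa using hi'
    | cast r => simpa using (hi r).trans l.le_succ

end GeneralizedWronskian

section L1Norm

variable {σ R : Type*} [SeminormedCommRing R]

/-- The sum of the norms of the coefficients of a polynomial, the measure of its height in Roth's
lemma. -/
noncomputable def l1Norm (f : MvPolynomial σ R) : ℝ :=
  ∑ k ∈ f.support, ‖coeff k f‖

lemma l1Norm_eq_sum {f : MvPolynomial σ R} {s : Finset (σ →₀ ℕ)} (h : f.support ⊆ s) :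
    l1Norm f = ∑ k ∈ s, ‖coeff k f‖ :=
  Finset.sum_subset h fun k _ hk ↦ by rw [notMem_support_iff.1 hk, norm_zero]

lemma l1Norm_nonneg (f : MvPolynomial σ R) : 0 ≤ l1Norm f :=
  Finset.sum_nonneg fun _ _ ↦ norm_nonneg _

lemma l1Norm_add_le (f g : MvPolynomial σ R) : l1Norm (f + g) ≤ l1Norm f + l1Norm g := by
  classical
  rw [l1Norm_eq_sum (support_add (p := f) (q := g)),
    l1Norm_eq_sum (Finset.subset_union_left (s₁ := f.support) (s₂ := g.support)),
    l1Norm_eq_sum (Finset.subset_union_right (s₁ := f.support) (s₂ := g.support)),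
    ← Finset.sum_add_distrib]
  exact Finset.sum_le_sum fun k _ ↦ by rw [coeff_add]; exact norm_add_le _ _

lemma l1Norm_sum_le {ι : Type*} (s : Finset ι) (f : ι → MvPolynomial σ R) :
    l1Norm (∑ i ∈ s, f i) ≤ ∑ i ∈ s, l1Norm (f i) :=
  Finset.le_sum_of_subadditive _ (by simp [l1Norm]) l1Norm_add_le s f

lemma l1Norm_neg (f : MvPolynomial σ R) : l1Norm (-f) = l1Norm f := by
  simp [l1Norm, support_neg]

lemma l1Norm_monomial (k : σ →₀ ℕ) (c : R) : l1Norm (monomial k c) = ‖c‖ := by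
  classical
  rw [l1Norm_eq_sum (s := {k}) support_monomial_subset]
  simp

lemma l1Norm_mul_le (f g : MvPolynomial σ R) : l1Norm (f * g) ≤ l1Norm f * l1Norm g := by
  have hfg : l1Norm f * l1Norm g = ∑ k ∈ f.support, ∑ k' ∈ g.support, ‖coeff k f‖ * ‖coeff k' g‖ :=
    Finset.sum_mul_sum _ _ _ _
  rw [hfg]
  conv_lhs => rw [f.as_sum, g.as_sum, Finset.sum_mul_sum]
  refine (l1Norm_sum_le _ _).trans (Finset.sum_le_sum fun k _ ↦ ?_)
  refine (l1Norm_sum_le _ _).trans (Finset.sum_le_sum fun k' _ ↦ ?_)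
  rw [monomial_mul, l1Norm_monomial]
  exact norm_mul_le _ _

lemma l1Norm_prod_le [NormOneClass R] {ι : Type*} (s : Finset ι) (f : ι → MvPolynomial σ R) :
    l1Norm (∏ i ∈ s, f i) ≤ ∏ i ∈ s, l1Norm (f i) := by
  classical
  induction s using Finset.induction_on with
  | empty => rw [Finset.prod_empty, Finset.prod_empty, ← C_1, C_apply, l1Norm_monomial, norm_one]
  | insert a s ha ih =>
    rw [Finset.prod_insert ha, Finset.prod_insert ha]
    exact (l1Norm_mul_le _ _).trans (mul_le_mul_of_nonneg_left ih (l1Norm_nonneg _))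

lemma l1Norm_det_le [NormOneClass R] {l : ℕ} {M : Matrix (Fin l) (Fin l) (MvPolynomial σ R)}
    {B : ℝ} (h : ∀ r s, l1Norm (M r s) ≤ B) : l1Norm M.det ≤ l.factorial * B ^ l := by
  have hterm (τ : Equiv.Perm (Fin l)) :
      l1Norm (Equiv.Perm.sign τ • ∏ i, M (τ i) i) ≤ B ^ l := by
    have hsign : l1Norm (Equiv.Perm.sign τ • ∏ i, M (τ i) i) = l1Norm (∏ i, M (τ i) i) := by
      rcases Int.units_eq_one_or (Equiv.Perm.sign τ) with h | h <;> simp [h, l1Norm_neg]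
    calc l1Norm (Equiv.Perm.sign τ • ∏ i, M (τ i) i) ≤ ∏ i, l1Norm (M (τ i) i) :=
          hsign.trans_le (l1Norm_prod_le _ _)
      _ ≤ ∏ _i : Fin l, B :=
          Finset.prod_le_prod (fun _ _ ↦ l1Norm_nonneg _) fun i _ ↦ h (τ i) i
      _ = B ^ l := by simp
  rw [Matrix.det_apply]
  refine (l1Norm_sum_le _ _).trans ((Finset.sum_le_sum fun τ _ ↦ hterm τ).trans_eq ?_)
  simp [Fintype.card_perm]

lemma sum_norm_coeff_le_l1Norm {ι : Type*} (f : MvPolynomial σ R) (s : Finset ι)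
    {e : ι → σ →₀ ℕ} (he : Function.Injective e) : ∑ i ∈ s, ‖coeff (e i) f‖ ≤ l1Norm f := by
  classical
  rw [l1Norm_eq_sum (Finset.subset_union_left (s₁ := f.support) (s₂ := s.map ⟨e, he⟩))]
  refine (s.sum_map ⟨e, he⟩ fun k ↦ ‖coeff k f‖).symm.trans_le ?_
  exact Finset.sum_le_sum_of_subset_of_nonneg Finset.subset_union_right fun _ _ _ ↦ norm_nonneg _

lemma norm_coeff_le_l1Norm (f : MvPolynomial σ R) (k : σ →₀ ℕ) : ‖coeff k f‖ ≤ l1Norm f := by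
  simpa using sum_norm_coeff_le_l1Norm f {()} (e := fun _ ↦ k) (fun _ _ _ ↦ rfl)

lemma one_le_l1Norm {f : MvPolynomial σ ℤ} (hf : f ≠ 0) : 1 ≤ l1Norm f := by
  obtain ⟨k, hk⟩ := ne_zero_iff.1 hf
  refine le_trans ?_ (norm_coeff_le_l1Norm f k)
  rw [Int.norm_eq_abs]
  exact_mod_cast Int.one_le_abs hk

lemma l1Norm_mvHasseDeriv_le [NormOneClass R] [Fintype σ] (i : σ →₀ ℕ) {f : MvPolynomial σ R}
    {d : σ → ℕ} (hd : ∀ j, degreeOf j f ≤ d j) :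
    l1Norm (mvHasseDeriv i f) ≤ 2 ^ (∑ j, d j) * l1Norm f := by
  have hcoeff (k : σ →₀ ℕ) :
      ‖coeff k (mvHasseDeriv i f)‖ ≤ 2 ^ (∑ j, d j) * ‖coeff (k + i) f‖ := by
    rw [coeff_mvHasseDeriv]
    by_cases h0 : coeff (k + i) f = 0
    · simp [h0]
    have hbinom : ∏ j, (k j + i j).choose (i j) ≤ 2 ^ (∑ j, d j) := by
      rw [← Finset.prod_pow_eq_pow_sum]
      refine Finset.prod_le_prod' fun j _ ↦ (Nat.choose_le_two_pow _ _).trans ?_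
      exact Nat.pow_le_pow_right two_pos (degreeOf_le_iff.1 (hd j) _ (mem_support_iff.2 h0))
    refine (norm_mul_le _ _).trans (mul_le_mul_of_nonneg_right ?_ (norm_nonneg _))
    refine (Nat.norm_cast_le _).trans ?_
    rw [norm_one, mul_one]
    exact_mod_cast hbinom
  calc l1Norm (mvHasseDeriv i f)
      ≤ ∑ k ∈ (mvHasseDeriv i f).support, 2 ^ (∑ j, d j) * ‖coeff (k + i) f‖ :=
        Finset.sum_le_sum fun k _ ↦ hcoeff k
    _ ≤ 2 ^ (∑ j, d j) * l1Norm f := by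
        rw [← Finset.mul_sum]
        gcongr
        exact sum_norm_coeff_le_l1Norm f _ (add_left_injective i)

end L1Norm

section DegreeOf

variable {σ R : Type*} [CommRing R]

lemma degreeOf_mvHasseDeriv_le [Finite σ] (i : σ →₀ ℕ) (f : MvPolynomial σ R) (j : σ) :
    degreeOf j (mvHasseDeriv i f) ≤ degreeOf j f := by
  cases nonempty_fintype σ
  refine degreeOf_le_iff.2 fun k hk ↦ ?_
  rw [mem_support_iff, coeff_mvHasseDeriv] at hk
  exact le_self_add.trans (monomial_le_degreeOf j (mem_support_iff.2 (right_ne_zero_of_mul hk)))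

lemma degreeOf_det_le {l : ℕ} {M : Matrix (Fin l) (Fin l) (MvPolynomial σ R)} {j : σ} {B : ℕ}
    (h : ∀ r s, degreeOf j (M r s) ≤ B) : degreeOf j M.det ≤ l * B := by
  rw [Matrix.det_apply]
  refine (degreeOf_sum_le _ _ _).trans (Finset.sup_le fun τ _ ↦ ?_)
  have hsign : degreeOf j (Equiv.Perm.sign τ • ∏ i, M (τ i) i) =
      degreeOf j (∏ i, M (τ i) i) := by
    rcases Int.units_eq_one_or (Equiv.Perm.sign τ) with h | h <;> simp [h, degreeOf_neg]
  rw [hsign]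
  refine (degreeOf_prod_le _ _ _).trans ((Finset.sum_le_sum fun i _ ↦ h (τ i) i).trans_eq ?_)
  simp

end DegreeOf

section Index

variable {σ R : Type*} [CommRing R] {w : σ → ℝ}

/-- The polynomials whose index at the origin with respect to the weights `w`, that is the least
weight of a monomial, is at least `θ`. -/
noncomputable def indexGE (R : Type*) [CommRing R] (w : σ → ℝ) (θ : ℝ) :
    Submodule R (MvPolynomial σ R) :=
  restrictSupport R {k | θ ≤ Finsupp.weight w k}

lemma mem_indexGE {θ : ℝ} {f : MvPolynomial σ R} :
    f ∈ indexGE R w θ ↔ ∀ k, coeff k f ≠ 0 → θ ≤ Finsupp.weight w k := by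
  simp only [indexGE, mem_restrictSupport_iff, Set.subset_def, SetLike.mem_coe, mem_support_iff,
    Set.mem_ofPred_eq]

lemma indexGE_antitone : Antitone (indexGE R w) :=
  fun _ _ h ↦ restrictSupport_mono R fun _ hk ↦ h.trans hk

lemma weight_nonneg (hw : 0 ≤ w) (k : σ →₀ ℕ) : 0 ≤ Finsupp.weight w k := by
  rw [Finsupp.weight_apply]
  exact Finset.sum_nonneg fun j _ ↦ nsmul_nonneg (hw j) _

lemma mul_mem_indexGE {θ θ' : ℝ} {f g : MvPolynomial σ R} (hf : f ∈ indexGE R w θ)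
    (hg : g ∈ indexGE R w θ') : f * g ∈ indexGE R w (θ + θ') := by
  refine restrictSupport_mono R ?_ ((restrictSupport_add R _ _).ge (Submodule.mul_mem_mul hf hg))
  rintro _ ⟨k, hk, k', hk', rfl⟩
  simpa only [Set.mem_ofPred_eq, map_add] using add_le_add hk hk'

lemma prod_mem_indexGE (hw : 0 ≤ w) {ι : Type*} {s : Finset ι} {θ : ι → ℝ}
    {f : ι → MvPolynomial σ R} (h : ∀ i ∈ s, f i ∈ indexGE R w (θ i)) :
    ∏ i ∈ s, f i ∈ indexGE R w (∑ i ∈ s, θ i) := by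
  classical
  induction s using Finset.induction_on with
  | empty => exact mem_indexGE.2 fun k _ ↦ by simpa using weight_nonneg hw k
  | insert a s ha ih =>
    rw [Finset.prod_insert ha, Finset.sum_insert ha]
    exact mul_mem_indexGE (h a (Finset.mem_insert_self _ _))
      (ih fun i hi ↦ h i (Finset.mem_insert_of_mem hi))

lemma det_mem_indexGE (hw : 0 ≤ w) {l : ℕ} {θ : Fin l → ℝ}
    {M : Matrix (Fin l) (Fin l) (MvPolynomial σ R)} (h : ∀ r s, M r s ∈ indexGE R w (θ s)) :
    M.det ∈ indexGE R w (∑ s, θ s) := by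
  rw [Matrix.det_apply]
  refine Submodule.sum_mem _ fun τ _ ↦ ?_
  have hprod : ∏ i, M (τ i) i ∈ indexGE R w (∑ s, θ s) :=
    prod_mem_indexGE hw fun i _ ↦ h (τ i) i
  rcases Int.units_eq_one_or (Equiv.Perm.sign τ) with hτ | hτ
  · simpa [hτ] using hprod
  · simpa [hτ] using hprod

lemma mvHasseDeriv_mem_indexGE [Finite σ] {θ : ℝ} {f : MvPolynomial σ R}
    (hf : f ∈ indexGE R w θ) (i : σ →₀ ℕ) :
    mvHasseDeriv i f ∈ indexGE R w (θ - Finsupp.weight w i) := by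
  cases nonempty_fintype σ
  refine mem_indexGE.2 fun k hk ↦ ?_
  rw [coeff_mvHasseDeriv] at hk
  have := mem_indexGE.1 hf _ (right_ne_zero_of_mul hk)
  rw [map_add] at this
  linarith

end Index

section SeparatedProduct

variable {R : Type*} [CommRing R] {m : ℕ}

/-- The product `A(X₁, …, Xₘ) B(X₀)` of two polynomials in separate variables. -/
noncomputable def separatedMul (A : MvPolynomial (Fin m) R) (B : Polynomial R) :
    MvPolynomial (Fin (m + 1)) R :=
  rename Fin.succ A * B.toMvPolynomial 0

lemma finSuccEquiv_separatedMul (A : MvPolynomial (Fin m) R) (B : Polynomial R) :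
    finSuccEquiv R m (separatedMul A B) = Polynomial.C A * B.map C := by
  have hB : finSuccEquiv R m (B.toMvPolynomial 0) = B.map C := by
    rw [Polynomial.toMvPolynomial, ← AlgEquiv.coe_toAlgHom, ← Polynomial.aeval_algHom_apply,
      AlgEquiv.coe_toAlgHom, finSuccEquiv_X_zero,
      ← Polynomial.aeval_map_algebraMap (MvPolynomial (Fin m) R), Polynomial.aeval_X_left_apply,
      algebraMap_eq]
  have hA : finSuccEquiv R m (rename Fin.succ A) = Polynomial.C A := by
    induction A using MvPolynomial.induction_on with
    | C r => rw [rename_C]; exact (finSuccEquiv R m).commutes r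
    | add p q hp hq => simp only [map_add, hp, hq]
    | mul_X p j hp => simp only [map_mul, hp, rename_X, finSuccEquiv_X_succ]
  rw [separatedMul, map_mul, hA, hB]

lemma coeff_cons_separatedMul (A : MvPolynomial (Fin m) R) (B : Polynomial R) (s : ℕ)
    (I : Fin m →₀ ℕ) :
    coeff (Finsupp.cons s I) (separatedMul A B) = coeff I A * B.coeff s := by
  rw [← finSuccEquiv_coeff_coeff, finSuccEquiv_separatedMul, Polynomial.coeff_C_mul,
    Polynomial.coeff_map, mul_comm A, coeff_C_mul, mul_comm]

lemma ext_coeff_cons {f g : MvPolynomial (Fin (m + 1)) R}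
    (h : ∀ s I, coeff (Finsupp.cons s I) f = coeff (Finsupp.cons s I) g) : f = g := by
  ext e
  rw [← Finsupp.cons_tail e]
  exact h _ _

lemma separatedMul_ne_zero [IsDomain R] {A : MvPolynomial (Fin m) R} {B : Polynomial R} (hA : A ≠ 0)
    (hB : B ≠ 0) : separatedMul A B ≠ 0 := by
  obtain ⟨I, hI⟩ := ne_zero_iff.1 hA
  refine ne_zero_iff.2 ⟨Finsupp.cons B.natDegree I, ?_⟩
  rw [coeff_cons_separatedMul]
  exact mul_ne_zero hI (Polynomial.leadingCoeff_ne_zero.2 hB)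

lemma eval_separatedMul (x : Fin (m + 1) → R) (A : MvPolynomial (Fin m) R) (B : Polynomial R) :
    eval x (separatedMul A B) = eval (fun j ↦ x j.succ) A * B.eval (x 0) := by
  rw [separatedMul, map_mul, eval_rename, eval_toMvPolynomial]
  rfl

lemma map_separatedMul {S : Type*} [CommRing S] (φ : R →+* S) (A : MvPolynomial (Fin m) R)
    (B : Polynomial R) : map φ (separatedMul A B) = separatedMul (map φ A) (B.map φ) :=
  ext_coeff_cons fun s I ↦ by
    rw [coeff_map, coeff_cons_separatedMul, coeff_cons_separatedMul, map_mul, coeff_map,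
      Polynomial.coeff_map]

lemma mvHasseDeriv_cons_separatedMul (A : MvPolynomial (Fin m) R) (B : Polynomial R) (s : ℕ)
    (I : Fin m →₀ ℕ) :
    mvHasseDeriv (Finsupp.cons s I) (separatedMul A B) =
      separatedMul (mvHasseDeriv I A) (Polynomial.hasseDeriv s B) := by
  refine ext_coeff_cons fun e E ↦ ?_
  have hadd : Finsupp.cons e E + Finsupp.cons s I = Finsupp.cons (e + s) (E + I) := by
    ext j
    cases j using Fin.cases <;> simp
  simp only [coeff_mvHasseDeriv, hadd, coeff_cons_separatedMul, Polynomial.hasseDeriv_coeff,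
    Fin.prod_univ_succ, Finsupp.cons_zero, Finsupp.cons_succ, Nat.cast_mul]
  ring

lemma mvHasseDeriv_toMvPolynomial (i : Fin 1 →₀ ℕ) (B : Polynomial R) :
    mvHasseDeriv i (B.toMvPolynomial 0) =
      (Polynomial.hasseDeriv (i 0) B).toMvPolynomial (0 : Fin 1) := by
  have h (B : Polynomial R) : B.toMvPolynomial (0 : Fin 1) = separatedMul 1 B := by
    rw [separatedMul, map_one, one_mul]
  rw [h, h, ← Finsupp.cons_tail i, Subsingleton.elim i.tail 0, mvHasseDeriv_cons_separatedMul,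
    mvHasseDeriv_zero, Finsupp.cons_zero]

lemma translate_separatedMul (x : Fin (m + 1) → R) (A : MvPolynomial (Fin m) R)
    (B : Polynomial R) :
    translate x (separatedMul A B) =
      separatedMul (translate (fun j ↦ x j.succ) A) (Polynomial.taylor (x 0) B) :=
  ext_coeff_cons fun s I ↦ by
    rw [coeff_translate, mvHasseDeriv_cons_separatedMul, eval_separatedMul,
      coeff_cons_separatedMul, coeff_translate, Polynomial.taylor_coeff]

lemma det_sum_separatedMul {l : ℕ} (M : Matrix (Fin l) (Fin l) (MvPolynomial (Fin m) R))
    (N : Matrix (Fin l) (Fin l) (Polynomial R)) :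
    (Matrix.of fun r s ↦ ∑ k, separatedMul (M r k) (N k s)).det =
      separatedMul M.det N.det := by
  rw [separatedMul, AlgHom.map_det, AlgHom.map_det, ← Matrix.det_mul]
  rfl

lemma weight_cons (w : Fin (m + 1) → ℝ) (s : ℕ) (I : Fin m →₀ ℕ) :
    Finsupp.weight w (Finsupp.cons s I) = s * w 0 + Finsupp.weight (fun j ↦ w j.succ) I := by
  simp [Finsupp.weight_apply, Finsupp.sum_fintype, Fin.sum_univ_succ]

end SeparatedProduct

section SeparatedWronskian

/-- The Wronskian of `P` whose rows are given by the orders `i` of differentiation in `X₁, …, Xₘ`,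
and whose columns by the orders `0, 1, …, l - 1` of differentiation in `X₀`. It is a product of
generalized Wronskians in the separate variables, see `exists_separatedWronskian_eq`. -/
noncomputable def separatedWronskian {R : Type*} [CommRing R] {m l : ℕ} (i : Fin l → Fin m →₀ ℕ)
    (P : MvPolynomial (Fin (m + 1)) R) : MvPolynomial (Fin (m + 1)) R :=
  (Matrix.of fun r s : Fin l ↦ mvHasseDeriv (Finsupp.cons (s : ℕ) (i r)) P).det

lemma map_separatedWronskian {R S : Type*} [CommRing R] [CommRing S] (φ : R →+* S) {m l : ℕ}
    (i : Fin l → Fin m →₀ ℕ) (P : MvPolynomial (Fin (m + 1)) R) :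
    map φ (separatedWronskian i P) = separatedWronskian i (map φ P) := by
  simp only [separatedWronskian, RingHom.map_det, ← map_mvHasseDeriv]
  rfl

variable {K : Type*} [Field K]

lemma exists_linearIndependent_factorization {ι M : Type*} [Finite ι] [AddCommGroup M]
    [Module K M] (v : ι → M) :
    ∃ (l : ℕ) (A : Fin l → M) (β : Fin l → ι → K), l ≤ Nat.card ι ∧ LinearIndependent K A ∧
      LinearIndependent K β ∧ ∀ s, v s = ∑ k, β k s • A k := by
  cases nonempty_fintype ι
  let V := Submodule.span K (Set.range v)
  let v' (s : ι) : V := ⟨v s, Submodule.subset_span ⟨s, rfl⟩⟩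
  have hspan : Submodule.span K (Set.range v') = ⊤ := by
    rw [← Submodule.map_injective_of_injective V.injective_subtype |>.eq_iff, Submodule.map_span,
      ← Set.range_comp, Submodule.map_top, Submodule.range_subtype]
    rfl
  have : Module.Finite K V := Module.Finite.span_of_finite K (Set.finite_range v)
  let b := Module.finBasis K V
  refine ⟨Module.finrank K V, fun k ↦ b k, fun k s ↦ b.coord k (v' s), ?_,
    b.linearIndependent.map' V.subtype V.ker_subtype, ?_, fun s ↦ ?_⟩
  · rw [Nat.card_eq_fintype_card]
    exact finrank_range_le_card v
  · rw [Fintype.linearIndependent_iff]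
    intro c hc k
    have hzero : ∑ k, c k • b.coord k = 0 :=
      LinearMap.ext_on_range hspan fun s ↦ by simpa using congrFun hc s
    simpa [Finsupp.single_apply] using congrArg (fun f : V →ₗ[K] K ↦ f (b k)) hzero
  · have hrepr := congrArg V.subtype (b.sum_repr (v' s))
    rw [map_sum] at hrepr
    exact hrepr.symm

lemma exists_eq_sum_separatedMul {m d : ℕ} (P : MvPolynomial (Fin (m + 1)) K)
    (hd : degreeOf 0 P ≤ d) :
    ∃ (l : ℕ) (A : Fin l → MvPolynomial (Fin m) K) (B : Fin l → Polynomial K),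
      l ≤ d + 1 ∧ LinearIndependent K A ∧ LinearIndependent K B ∧
        P = ∑ k, separatedMul (A k) (B k) := by
  classical
  set F := finSuccEquiv K m P with hF
  obtain ⟨l, A, β, hl, hA, hβ, hv⟩ :=
    exists_linearIndependent_factorization (K := K) fun s : Fin (d + 1) ↦ F.coeff s
  refine ⟨l, A, fun k ↦ Polynomial.ofFn (d + 1) (β k), by simpa using hl, hA,
    hβ.map' _ (LinearMap.ker_eq_bot.2 (Polynomial.injective_ofFn _)), ?_⟩
  refine ext_coeff_cons fun s I ↦ ?_
  simp only [coeff_sum, coeff_cons_separatedMul]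
  rw [← finSuccEquiv_coeff_coeff, ← hF]
  rcases lt_or_ge d s with hs | hs
  · rw [Polynomial.coeff_eq_zero_of_natDegree_lt
      ((natDegree_finSuccEquiv P).trans_le hd |>.trans_lt hs)]
    simp [Polynomial.ofFn_coeff_eq_zero_of_ge _ (Nat.succ_le_of_lt hs)]
  · have hs' : s < d + 1 := Nat.lt_succ_of_le hs
    rw [hv ⟨s, hs'⟩, coeff_sum]
    exact Finset.sum_congr rfl fun k _ ↦ by
      rw [coeff_smul, smul_eq_mul, Polynomial.ofFn_coeff_eq_val_of_lt _ hs', mul_comm]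

lemma det_hasseDeriv_ne_zero [CharZero K] {l : ℕ} {B : Fin l → Polynomial K}
    (hB : LinearIndependent K B) :
    (Matrix.of fun k s : Fin l ↦ Polynomial.hasseDeriv (s : ℕ) (B k)).det ≠ 0 := by
  set M := Matrix.of fun k s : Fin l ↦ Polynomial.hasseDeriv (s : ℕ) (B k)
  let φ : Polynomial K →ₐ[K] MvPolynomial (Fin 1) K := Polynomial.toMvPolynomial 0
  have hφ : LinearIndependent K (φ ∘ B) :=
    hB.map' φ.toLinearMap (LinearMap.ker_eq_bot.2 (Polynomial.toMvPolynomial_injective 0))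
  obtain ⟨i, hi, hdet⟩ := exists_det_wronskianMatrix_ne_zero _ hφ
  have hlt (r : Fin l) : i r 0 < l := by
    simpa [Finsupp.degree_eq_sum] using Nat.lt_of_succ_le (hi r)
  have hinj : Function.Injective fun r ↦ (⟨i r 0, hlt r⟩ : Fin l) := fun r r' hrr ↦ by
    have hir : i r 0 = i r' 0 := congrArg Fin.val hrr
    by_contra hne
    refine hdet (Matrix.det_zero_of_row_eq hne (funext fun k ↦ ?_))
    simp only [wronskianMatrix, Matrix.of_apply, Function.comp_apply, φ,
      mvHasseDeriv_toMvPolynomial, hir]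
  let τ : Equiv.Perm (Fin l) := Equiv.ofBijective _ (Finite.injective_iff_bijective.1 hinj)
  have hwronskian : wronskianMatrix i (φ ∘ B) = (φ.mapMatrix M.transpose).submatrix τ id := by
    ext1 r k
    exact mvHasseDeriv_toMvPolynomial (i r) (B k)
  intro h0
  rw [hwronskian, Matrix.det_permute, ← AlgHom.map_det, Matrix.det_transpose, h0, map_zero,
    mul_zero] at hdet
  exact hdet rfl

theorem exists_separatedWronskian_eq [CharZero K] {m d : ℕ} {P : MvPolynomial (Fin (m + 1)) K}
    (hP : P ≠ 0) (hd : degreeOf 0 P ≤ d) :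
    ∃ (l : ℕ) (i : Fin l → Fin m →₀ ℕ) (U : MvPolynomial (Fin m) K) (V : Polynomial K),
      0 < l ∧ l ≤ d + 1 ∧ (∀ r, (i r).degree + 1 ≤ l) ∧ U ≠ 0 ∧ V ≠ 0 ∧
        separatedWronskian i P = separatedMul U V := by
  obtain ⟨l, A, B, hl, hA, hB, rfl⟩ := exists_eq_sum_separatedMul P hd
  obtain ⟨i, hi, hdet⟩ := exists_det_wronskianMatrix_ne_zero A hA
  have hl0 : l ≠ 0 := by
    rintro rfl
    simp at hP
  refine ⟨l, i, _, _, Nat.pos_of_ne_zero hl0, hl, hi, hdet, det_hasseDeriv_ne_zero hB, ?_⟩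
  rw [← det_sum_separatedMul]
  simp only [separatedWronskian, wronskianMatrix, map_sum, mvHasseDeriv_cons_separatedMul,
    Matrix.of_apply]

lemma degreeOf_separatedWronskian_le {R : Type*} [CommRing R] {m l B : ℕ}
    (i : Fin l → Fin m →₀ ℕ) {P : MvPolynomial (Fin (m + 1)) R} {j : Fin (m + 1)}
    (h : degreeOf j P ≤ B) : degreeOf j (separatedWronskian i P) ≤ l * B :=
  degreeOf_det_le fun _ _ ↦ (degreeOf_mvHasseDeriv_le ..).trans h

lemma log_l1Norm_separatedWronskian_le {m l : ℕ} (hl : 0 < l) (i : Fin l → Fin m →₀ ℕ)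
    {P : MvPolynomial (Fin (m + 1)) ℤ} {d : Fin (m + 1) → ℕ} (hd : ∀ j, degreeOf j P ≤ d j)
    (hW : separatedWronskian i P ≠ 0) :
    Real.log (l1Norm (separatedWronskian i P)) ≤
      l * ((l - 1 : ℝ) + ∑ j, (d j : ℝ) + Real.log (l1Norm P)) := by
  have hP : P ≠ 0 := by
    rintro rfl
    exact hW (Matrix.det_eq_zero_of_row_eq_zero ⟨0, hl⟩ fun _ ↦ by simp)
  have hQ : 0 < l1Norm P := zero_lt_one.trans_le (one_le_l1Norm hP)
  have hl0 : (0 : ℝ) < l := by exact_mod_cast hl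
  have hdet : l1Norm (separatedWronskian i P) ≤ (l * (2 ^ (∑ j, d j) * l1Norm P)) ^ l := by
    refine (l1Norm_det_le fun r s ↦ l1Norm_mvHasseDeriv_le _ hd).trans ?_
    rw [mul_pow (l : ℝ)]
    gcongr
    exact_mod_cast Nat.factorial_le_pow l
  have hlog2 : Real.log 2 ≤ 1 := by linarith [Real.log_two_lt_d9]
  calc Real.log (l1Norm (separatedWronskian i P))
      ≤ Real.log ((l * (2 ^ (∑ j, d j) * l1Norm P)) ^ l) :=
        Real.log_le_log (zero_lt_one.trans_le (one_le_l1Norm hW)) hdet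
    _ = l * (Real.log l + ((∑ j, (d j : ℝ)) * Real.log 2 + Real.log (l1Norm P))) := by
        rw [Real.log_pow, Real.log_mul (by positivity) (by positivity),
          Real.log_mul (by positivity) (by positivity), Real.log_pow, Nat.cast_sum]
    _ ≤ l * ((l - 1 : ℝ) + (∑ j, (d j : ℝ) * 1 + Real.log (l1Norm P))) := by
        rw [Finset.sum_mul]
        gcongr
        exact Real.log_le_sub_one_of_pos hl0
    _ = _ := by simp only [mul_one, add_assoc]

lemma translate_separatedWronskian_mem_indexGE {R : Type*} [CommRing R] {m l : ℕ}
    {w : Fin (m + 1) → ℝ} (hw : 0 ≤ w) {i : Fin l → Fin m →₀ ℕ} {δ ε : ℝ}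
    (hi : ∀ r, Finsupp.weight (fun j ↦ w j.succ) (i r) ≤ δ) {P : MvPolynomial (Fin (m + 1)) R}
    {x : Fin (m + 1) → R} (hP : translate x P ∈ indexGE R w ε) :
    translate x (separatedWronskian i P) ∈
      indexGE R w (∑ s : Fin l, max 0 (ε - δ - (s : ℕ) * w 0)) := by
  rw [separatedWronskian, AlgHom.map_det]
  refine det_mem_indexGE hw fun r s ↦ ?_
  simp only [AlgHom.mapMatrix_apply, Matrix.map_apply, Matrix.of_apply, translate_mvHasseDeriv]
  rcases le_total (ε - δ - (s : ℕ) * w 0) 0 with h | h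
  · rw [max_eq_left h]
    exact mem_indexGE.2 fun k _ ↦ weight_nonneg hw k
  · rw [max_eq_right h]
    refine indexGE_antitone ?_ (mvHasseDeriv_mem_indexGE hP _)
    rw [weight_cons]
    linarith [hi r]

lemma exists_C_mul_eq_separatedMul {m : ℕ} {W : MvPolynomial (Fin (m + 1)) ℤ}
    {U : MvPolynomial (Fin m) ℚ} {V : Polynomial ℚ} (hU : U ≠ 0) (hV : V ≠ 0)
    (h : map (Int.castRingHom ℚ) W = separatedMul U V) :
    ∃ (c : ℤ) (U' : MvPolynomial (Fin m) ℤ) (V' : Polynomial ℤ), U' ≠ 0 ∧ V' ≠ 0 ∧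
      C c * W = separatedMul U' V' ∧ l1Norm U' ≤ l1Norm W ∧
      |(V'.leadingCoeff : ℝ)| ≤ l1Norm W ∧ ∀ j, degreeOf j U' ≤ degreeOf j.succ W := by
  classical
  obtain ⟨I₀, hI₀⟩ := ne_zero_iff.1 hU
  obtain ⟨s₀, hs₀⟩ : ∃ s, V.coeff s ≠ 0 := by
    by_contra! hzero
    exact hV (Polynomial.ext hzero)
  have hW (s : ℕ) (I : Fin m →₀ ℕ) :
      ((coeff (Finsupp.cons s I) W : ℤ) : ℚ) = coeff I U * V.coeff s := by
    rw [← coeff_cons_separatedMul, ← h, coeff_map, eq_intCast]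
  set F := finSuccEquiv ℤ m W with hF
  let U' := F.coeff s₀
  let V' := Polynomial.ofFn (F.natDegree + 1) fun s ↦ coeff I₀ (F.coeff s)
  have hU' (I : Fin m →₀ ℕ) : coeff I U' = coeff (Finsupp.cons s₀ I) W :=
    finSuccEquiv_coeff_coeff ..
  have hV' (s : ℕ) : V'.coeff s = coeff (Finsupp.cons s I₀) W := by
    rw [← finSuccEquiv_coeff_coeff, ← hF]
    rcases lt_or_ge s (F.natDegree + 1) with hs | hs
    · exact Polynomial.ofFn_coeff_eq_val_of_lt _ hs
    · rw [Polynomial.ofFn_coeff_eq_zero_of_ge _ hs,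
        Polynomial.coeff_eq_zero_of_natDegree_lt hs, coeff_zero]
  have hc : coeff (Finsupp.cons s₀ I₀) W ≠ 0 := by
    rw [← Int.cast_ne_zero (α := ℚ), hW]
    exact mul_ne_zero hI₀ hs₀
  refine ⟨coeff (Finsupp.cons s₀ I₀) W, U', V', fun h0 ↦ hc ?_, fun h0 ↦ hc ?_,
    ext_coeff_cons fun s I ↦ ?_, ?_, ?_, fun j ↦ degreeOf_le_iff.2 fun I hI ↦ ?_⟩
  · rw [← hU', h0, coeff_zero]
  · rw [← hV', h0, Polynomial.coeff_zero]
  · rw [coeff_C_mul, coeff_cons_separatedMul, hU', hV', ← Int.cast_inj (α := ℚ)]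
    push_cast
    simp only [hW]
    ring
  · simpa only [l1Norm, ← hU'] using
      sum_norm_coeff_le_l1Norm W U'.support (Finsupp.cons_right_injective s₀)
  · rw [Polynomial.leadingCoeff, hV', ← Int.norm_eq_abs]
    exact norm_coeff_le_l1Norm ..
  · rw [mem_support_iff, hU', ← mem_support_iff] at hI
    simpa using degreeOf_le_iff.1 (le_refl (degreeOf j.succ W)) _ hI

end SeparatedWronskian

section RootMultiplicity

/-- A bound for the multiplicity of `ξ` as a root of an integer polynomial in terms of the leading
coefficient, which Gauss's lemma yields for an algebraic number whose primitive minimal polynomial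
has leading coefficient of size at least `exp L`. -/
def RootMultBound (ξ L : ℝ) : Prop :=
  ∀ G : Polynomial ℤ, G ≠ 0 →
    (G.map (Int.castRingHom ℝ)).rootMultiplicity ξ * L ≤ Real.log |(G.leadingCoeff : ℝ)|

lemma coeff_taylor_rootMultiplicity_ne_zero {ξ : ℝ} {B : Polynomial ℝ} (hB : B ≠ 0) :
    (Polynomial.taylor ξ B).coeff (B.rootMultiplicity ξ) ≠ 0 := by
  rw [Polynomial.rootMultiplicity_eq_natTrailingDegree, ← Polynomial.taylor_apply]
  exact Polynomial.trailingCoeff_nonzero_iff_nonzero.2 ((Polynomial.taylor_eq_zero ξ B).not.2 hB)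

end RootMultiplicity

lemma sum_max_zero_sub_ge {l d : ℕ} {e : ℝ} (he : 0 < e) (he1 : e ≤ 1) (hl : l ≤ 2 * d)
    (hd : 0 < d) :
    e ^ 2 * l / 8 ≤ ∑ s : Fin l, max 0 (e - (s : ℕ) * (d : ℝ)⁻¹) := by
  rw [Fin.sum_univ_eq_sum_range fun s ↦ max 0 (e - (s : ℕ) * (d : ℝ)⁻¹)]
  have hl' : (l : ℝ) ≤ 2 * d := by exact_mod_cast hl
  set n := ⌈e * l / 4⌉₊ with hn
  have hnl : n ≤ l := by
    rw [hn, Nat.ceil_le]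
    nlinarith [(Nat.cast_nonneg l : (0 : ℝ) ≤ l)]
  have hterm (s : ℕ) (hs : s ∈ Finset.range n) :
      e / 2 ≤ max 0 (e - (s : ℕ) * (d : ℝ)⁻¹) := by
    rw [Finset.mem_range, hn, Nat.lt_ceil] at hs
    have hsd : (s : ℝ) * (d : ℝ)⁻¹ ≤ e / 2 := by
      rw [← div_eq_mul_inv, div_le_iff₀ (by exact_mod_cast hd)]
      nlinarith
    exact le_max_of_le_right (by linarith)
  calc e ^ 2 * l / 8 = e * l / 4 * (e / 2) := by ring
    _ ≤ n * (e / 2) := by gcongr; exact Nat.le_ceil _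
    _ = ∑ _s ∈ Finset.range n, e / 2 := by simp
    _ ≤ ∑ s ∈ Finset.range n, max 0 (e - (s : ℕ) * (d : ℝ)⁻¹) := Finset.sum_le_sum hterm
    _ ≤ _ := Finset.sum_le_sum_of_subset_of_nonneg (Finset.range_mono hnl)
      fun _ _ _ ↦ le_max_left ..

section RothLemma

/-- The hypotheses of Roth's lemma with parameter `η`, for a polynomial `P` of degree at most `d j`
in `X j` and points `ξ j` of logarithmic height `L j`. The number `T` is the common order of
magnitude of the products `d j * L j`. -/
structure RothHypotheses {m : ℕ} (η : ℝ) (d : Fin m → ℕ) (ξ L : Fin m → ℝ) (T : ℝ)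
    (P : MvPolynomial (Fin m) ℤ) : Prop where
  degree_pos : ∀ j, 0 < d j
  degree_le_mul : ∀ j k, j < k → (d j : ℝ) ≤ η * d k
  rootMultBound : ∀ j, RootMultBound (ξ j) (L j)
  le_degree_mul : ∀ j, T ≤ d j * L j
  sum_degree_le : ∑ j, (d j : ℝ) ≤ η * T
  ne_zero : P ≠ 0
  degreeOf_le : ∀ j, degreeOf j P ≤ d j
  log_l1Norm_le : Real.log (l1Norm P) ≤ η * T

/-- The statement of Roth's lemma in `m` variables with parameters `ε` and `η`: the index of `P` at
`ξ` with respect to the weights `1 / d j` is at most `ε`. -/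
def RothLemma (m : ℕ) (ε η : ℝ) : Prop :=
  ∀ ⦃d : Fin m → ℕ⦄ ⦃ξ L : Fin m → ℝ⦄ ⦃T : ℝ⦄ ⦃P : MvPolynomial (Fin m) ℤ⦄,
    RothHypotheses η d ξ L T P → ∃ I : Fin m →₀ ℕ, Finsupp.weight (fun j ↦ (d j : ℝ)⁻¹) I ≤ ε ∧
      coeff I (translate ξ (map (Int.castRingHom ℝ) P)) ≠ 0

lemma rothLemma_zero {ε : ℝ} (hε : 0 ≤ ε) (η : ℝ) : RothLemma 0 ε η := by
  intro d ξ L T P h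
  refine ⟨0, by simpa using hε, ?_⟩
  obtain ⟨c, rfl⟩ : ∃ c, P = C c := ⟨_, eq_C_of_isEmpty P⟩
  have hc : c ≠ 0 := fun hc ↦ h.ne_zero (by rw [hc, map_zero])
  have hC : translate ξ (map (Int.castRingHom ℝ) (C c)) = C (c : ℝ) := by simp [translate]
  rw [hC, coeff_zero_C]
  exact_mod_cast hc

variable {m : ℕ} {η : ℝ} {d : Fin (m + 1) → ℕ} {ξ L : Fin (m + 1) → ℝ} {T : ℝ}
  {P : MvPolynomial (Fin (m + 1)) ℤ}

lemma RothHypotheses.pos (h : RothHypotheses η d ξ L T P) (hη : 0 < η) : 0 < T := by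
  have hsum : 0 < ∑ j, (d j : ℝ) :=
    Finset.sum_pos (fun j _ ↦ by exact_mod_cast h.degree_pos j) Finset.univ_nonempty
  exact pos_of_mul_pos_right (hsum.trans_le h.sum_degree_le) hη.le

lemma RothHypotheses.log_l1Norm_separatedWronskian_le (h : RothHypotheses η d ξ L T P) {l : ℕ}
    (hl : 0 < l) (hld : l ≤ d 0 + 1) {i : Fin l → Fin m →₀ ℕ} (hW : separatedWronskian i P ≠ 0) :
    Real.log (l1Norm (separatedWronskian i P)) ≤ l * (3 * η * T) := by
  refine (TwoPlaceRoth.log_l1Norm_separatedWronskian_le hl i h.degreeOf_le hW).trans ?_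
  have hd₀ : (d 0 : ℝ) ≤ ∑ j, (d j : ℝ) :=
    Finset.single_le_sum (f := fun j ↦ (d j : ℝ)) (fun j _ ↦ Nat.cast_nonneg _) (Finset.mem_univ 0)
  have hld' : (l : ℝ) ≤ d 0 + 1 := by exact_mod_cast hld
  gcongr
  linarith [h.sum_degree_le, h.log_l1Norm_le]

lemma RothHypotheses.tail (h : RothHypotheses η d ξ L T P) (hη : 0 < η) {η' : ℝ} (hη' : 3 * η ≤ η')
    {l : ℕ} (hl : 0 < l) {U : MvPolynomial (Fin m) ℤ} (hU : U ≠ 0)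
    (hdeg : ∀ j, degreeOf j U ≤ l * d j.succ)
    (hlog : Real.log (l1Norm U) ≤ l * (3 * η * T)) :
    RothHypotheses η' (fun j ↦ l * d j.succ) (fun j ↦ ξ j.succ) (fun j ↦ L j.succ) (l * T) U where
  degree_pos j := Nat.mul_pos hl (h.degree_pos _)
  degree_le_mul j k hjk := by
    have hle := h.degree_le_mul j.succ k.succ (Fin.succ_lt_succ_iff.2 hjk)
    push_cast
    calc (l : ℝ) * d j.succ ≤ l * (η' * d k.succ) := by
          gcongr
          exact hle.trans (by gcongr; linarith)
      _ = η' * (l * d k.succ) := by ring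
  rootMultBound j := h.rootMultBound j.succ
  le_degree_mul j := by
    push_cast
    rw [mul_assoc]
    gcongr
    exact h.le_degree_mul j.succ
  sum_degree_le := by
    have hsum := h.sum_degree_le
    rw [Fin.sum_univ_succ] at hsum
    have hT := h.pos hη
    push_cast
    rw [← Finset.mul_sum, mul_left_comm]
    gcongr
    calc ∑ j : Fin m, (d j.succ : ℝ) ≤ η * T := by linarith [(d 0).cast_nonneg (α := ℝ)]
      _ ≤ η' * T := by gcongr; linarith
  ne_zero := hU
  degreeOf_le := hdeg
  log_l1Norm_le := hlog.trans <| by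
    rw [mul_left_comm]
    have hT := h.pos hη
    gcongr

lemma RothHypotheses.rootMultiplicity_le (h : RothHypotheses η d ξ L T P) (hη : 0 < η) {l : ℕ}
    {V : Polynomial ℤ} (hV : V ≠ 0)
    (hlog : Real.log |(V.leadingCoeff : ℝ)| ≤ l * (3 * η * T)) :
    ((V.map (Int.castRingHom ℝ)).rootMultiplicity (ξ 0) : ℝ) * (d 0 : ℝ)⁻¹ ≤ 3 * η * l := by
  have hd₀ : (0 : ℝ) < d 0 := by exact_mod_cast h.degree_pos 0
  have hL : 0 < L 0 := pos_of_mul_pos_right ((h.pos hη).trans_le (h.le_degree_mul 0)) hd₀.le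
  rw [← div_eq_mul_inv, div_le_iff₀ hd₀]
  refine le_of_mul_le_mul_right ?_ hL
  calc _ ≤ l * (3 * η * T) := (h.rootMultBound 0 V hV).trans hlog
    _ ≤ l * (3 * η * (d 0 * L 0)) := by
      gcongr
      exact h.le_degree_mul 0
    _ = 3 * η * l * d 0 * L 0 := by ring

lemma coeff_translate_ne_zero_of_C_mul_eq_separatedMul {c : ℤ} {W : MvPolynomial (Fin (m + 1)) ℤ}
    {U : MvPolynomial (Fin m) ℤ} {V : Polynomial ℤ} (hV : V ≠ 0) (h : C c * W = separatedMul U V)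
    {I : Fin m →₀ ℕ}
    (hI : coeff I (translate (fun j ↦ ξ j.succ) (map (Int.castRingHom ℝ) U)) ≠ 0) :
    coeff (Finsupp.cons ((V.map (Int.castRingHom ℝ)).rootMultiplicity (ξ 0)) I)
      (translate ξ (map (Int.castRingHom ℝ) W)) ≠ 0 := by
  set V' := V.map (Int.castRingHom ℝ) with hV'
  have hV'0 : V' ≠ 0 := (Polynomial.map_ne_zero_iff Int.cast_injective).2 hV
  have hcoeff := congrArg (fun f ↦ coeff (Finsupp.cons (V'.rootMultiplicity (ξ 0)) I)
    (translate ξ (map (Int.castRingHom ℝ) f))) h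
  simp only [map_separatedMul, translate_separatedMul, coeff_cons_separatedMul, map_mul, map_C,
    ← hV'] at hcoeff
  have hC : translate ξ (C (Int.castRingHom ℝ c)) = C (Int.castRingHom ℝ c) := by simp [translate]
  rw [hC, coeff_C_mul] at hcoeff
  refine right_ne_zero_of_mul (a := Int.castRingHom ℝ c) ?_
  rw [hcoeff]
  exact mul_ne_zero hI (coeff_taylor_rootMultiplicity_ne_zero hV'0)

lemma exists_separatedWronskian_separatedMul {D : ℕ} (hP : P ≠ 0) (hD : degreeOf 0 P ≤ D) :
    ∃ (l : ℕ) (i : Fin l → Fin m →₀ ℕ) (c : ℤ) (U : MvPolynomial (Fin m) ℤ) (V : Polynomial ℤ),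
      0 < l ∧ l ≤ D + 1 ∧ (∀ r, (i r).degree + 1 ≤ l) ∧ U ≠ 0 ∧ V ≠ 0 ∧
      C c * separatedWronskian i P = separatedMul U V ∧ separatedWronskian i P ≠ 0 ∧
      l1Norm U ≤ l1Norm (separatedWronskian i P) ∧
      |(V.leadingCoeff : ℝ)| ≤ l1Norm (separatedWronskian i P) ∧
      ∀ j, degreeOf j U ≤ degreeOf j.succ (separatedWronskian i P) := by
  have hinj := map_injective (σ := Fin (m + 1)) (Int.castRingHom ℚ) Int.cast_injective
  have hdeg : degreeOf 0 (map (Int.castRingHom ℚ) P) ≤ D :=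
    degreeOf_le_iff.2 fun k hk ↦ degreeOf_le_iff.1 hD k (support_map_subset _ _ hk)
  obtain ⟨l, i, U, V, hl, hlD, hi, hU, hV, hW⟩ :=
    exists_separatedWronskian_eq ((map_ne_zero_iff _ hinj).2 hP) hdeg
  rw [← map_separatedWronskian] at hW
  obtain ⟨c, U', V', hU', hV', hUV, hnorm⟩ := exists_C_mul_eq_separatedMul hU hV hW
  refine ⟨l, i, c, U', V', hl, hlD, hi, hU', hV', hUV, fun h0 ↦ ?_, hnorm⟩
  rw [h0, map_zero] at hW
  exact separatedMul_ne_zero hU hV hW.symm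

lemma weight_le_degree_mul {σ : Type*} {w : σ → ℝ} {c : ℝ} (h : ∀ j, w j ≤ c)
    (I : σ →₀ ℕ) : Finsupp.weight w I ≤ I.degree * c := by
  rw [Finsupp.weight_apply, Finsupp.degree_apply, Nat.cast_sum, Finset.sum_mul]
  simp only [Finsupp.sum, nsmul_eq_mul]
  gcongr with j
  exact h j

lemma RothHypotheses.le_weight (h : RothHypotheses η d ξ L T P) (hη : 0 < η) {ε : ℝ}
    (hε : 2 * η ≤ ε) (hε1 : ε ≤ 1)
    (hP : translate ξ (map (Int.castRingHom ℝ) P) ∈ indexGE ℝ (fun j ↦ (d j : ℝ)⁻¹) ε) {l : ℕ}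
    (hl : l ≤ d 0 + 1) {i : Fin l → Fin m →₀ ℕ} (hi : ∀ r, (i r).degree + 1 ≤ l)
    {J : Fin (m + 1) →₀ ℕ}
    (hJ : coeff J (translate ξ (map (Int.castRingHom ℝ) (separatedWronskian i P))) ≠ 0) :
    ε ^ 2 * l / 32 ≤ Finsupp.weight (fun j ↦ (d j : ℝ)⁻¹) J := by
  have hd (j) : (0 : ℝ) < d j := by exact_mod_cast h.degree_pos j
  have hweight (r : Fin l) : Finsupp.weight (fun j : Fin m ↦ (d j.succ : ℝ)⁻¹) (i r) ≤ η := by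
    have hle (j : Fin m) : (d j.succ : ℝ)⁻¹ ≤ η / d 0 := by
      rw [inv_eq_one_div, div_le_div_iff₀ (hd _) (hd _), one_mul]
      exact h.degree_le_mul 0 j.succ (Fin.succ_pos j)
    have hdegree : (i r).degree ≤ d 0 := by have := hi r; omega
    calc _ ≤ ((i r).degree : ℝ) * (η / d 0) := weight_le_degree_mul hle _
      _ ≤ d 0 * (η / d 0) := by
        have := hd 0
        gcongr
      _ = η := mul_div_cancel₀ _ (hd 0).ne'
  rw [map_separatedWronskian] at hJ
  have hindex := mem_indexGE.1 (translate_separatedWronskian_mem_indexGE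
    (fun j ↦ (inv_pos.2 (hd j)).le) hweight hP) J hJ
  have hd₀ := h.degree_pos 0
  calc ε ^ 2 * l / 32 = (ε / 2) ^ 2 * l / 8 := by ring
    _ ≤ (ε - η) ^ 2 * l / 8 := by
      have hε0 : 0 ≤ ε / 2 := by linarith
      have hle : ε / 2 ≤ ε - η := by linarith
      gcongr
    _ ≤ _ := (sum_max_zero_sub_ge (by linarith) (by linarith) (by omega) hd₀).trans hindex

lemma RothLemma.succ {ε η' : ℝ} (hε : 0 < ε) (hε1 : ε ≤ 1) (hη : 0 < η) (hηη' : 3 * η ≤ η')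
    (hηε : η ≤ ε ^ 2 / 1000) (ih : RothLemma m (ε ^ 2 / 100) η') : RothLemma (m + 1) ε η := by
  intro d ξ L T P h
  by_contra! hcon
  obtain ⟨l, i, c, U, V, hl, hld, hi, hU, hV, hUV, hW, hnormU, hleadV, hdegU⟩ :=
    exists_separatedWronskian_separatedMul h.ne_zero (h.degreeOf_le 0)
  have hlogW := h.log_l1Norm_separatedWronskian_le hl hld hW
  have hlogU : Real.log (l1Norm U) ≤ l * (3 * η * T) :=
    (Real.log_le_log (zero_lt_one.trans_le (one_le_l1Norm hU)) hnormU).trans hlogW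
  have hlogV : Real.log |(V.leadingCoeff : ℝ)| ≤ l * (3 * η * T) :=
    (Real.log_le_log (abs_pos.2 (by exact_mod_cast Polynomial.leadingCoeff_ne_zero.2 hV))
      hleadV).trans hlogW
  obtain ⟨I, hIw, hI⟩ := ih (h.tail hη hηη' hl hU
    (fun j ↦ (hdegU j).trans (degreeOf_separatedWronskian_le i (h.degreeOf_le _))) hlogU)
  have hP : translate ξ (map (Int.castRingHom ℝ) P) ∈ indexGE ℝ (fun j ↦ (d j : ℝ)⁻¹) ε :=
    mem_indexGE.2 fun J hJ ↦ le_of_not_ge fun hle ↦ hJ (hcon J hle)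
  have hlow := h.le_weight hη (by nlinarith) hε1 hP hld hi
    (coeff_translate_ne_zero_of_C_mul_eq_separatedMul hV hUV hI)
  have hl0 : (0 : ℝ) < l := by exact_mod_cast hl
  have hIw' : Finsupp.weight (fun j : Fin m ↦ (d j.succ : ℝ)⁻¹) I ≤ l * (ε ^ 2 / 100) := by
    have hscale : Finsupp.weight (fun j ↦ ((l * d j.succ : ℕ) : ℝ)⁻¹) I =
        (l : ℝ)⁻¹ * Finsupp.weight (fun j : Fin m ↦ (d j.succ : ℝ)⁻¹) I := by
      simp only [Finsupp.weight_apply, Finsupp.mul_sum, Nat.cast_mul, mul_inv, nsmul_eq_mul,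
        mul_left_comm]
    rwa [hscale, inv_mul_le_iff₀ hl0] at hIw
  rw [weight_cons] at hlow
  have hk := h.rootMultiplicity_le hη hV hlogV
  have hcontra : ε ^ 2 * l / 32 ≤ l * (3 * (ε ^ 2 / 1000) + ε ^ 2 / 100) := by nlinarith
  nlinarith [mul_pos (pow_pos hε 2) hl0]

theorem exists_rothLemma (m : ℕ) {ε : ℝ} (hε : 0 < ε) (hε1 : ε ≤ 1) :
    ∃ η : ℝ, 0 < η ∧ RothLemma m ε η := by
  induction m generalizing ε with
  | zero => exact ⟨1, one_pos, rothLemma_zero hε.le 1⟩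
  | succ m ih =>
    obtain ⟨η', hη', hroth⟩ := ih (ε := ε ^ 2 / 100) (by positivity) (by nlinarith)
    exact ⟨min (η' / 3) (ε ^ 2 / 1000), by positivity, hroth.succ hε hε1 (by positivity)
      (by linarith [min_le_left (η' / 3) (ε ^ 2 / 1000)]) (min_le_right ..)⟩

end RothLemma

section ReductionModMinpoly

lemma degree_leadingCoeff_mul_X_sub_lt {R : Type*} [CommRing R] {f g : Polynomial R} {D : ℕ}
    (hf : f.natDegree = D + 1) (hg : g.degree < f.natDegree) :
    (Polynomial.C f.leadingCoeff * (g * Polynomial.X) - Polynomial.C (g.coeff D) * f).degree <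
      (f.natDegree : WithBot ℕ) := by
  rw [Polynomial.degree_lt_iff_coeff_zero] at hg ⊢
  intro l hl
  obtain ⟨k, rfl⟩ := Nat.exists_eq_add_of_le' ((Nat.succ_pos D).trans_le (hf ▸ hl))
  rw [Polynomial.coeff_sub, Polynomial.coeff_C_mul, Polynomial.coeff_C_mul, Polynomial.coeff_mul_X]
  rcases hl.eq_or_lt with h | h
  · obtain rfl : k = D := by omega
    rw [← h, Polynomial.leadingCoeff, mul_comm, sub_self]
  · rw [hg k (by omega), Polynomial.coeff_eq_zero_of_natDegree_lt h, mul_zero, mul_zero, sub_zero]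

variable {f : Polynomial ℤ} {α : ℝ}

lemma exists_aeval_eq_leadingCoeff_pow_mul_pow (hf : 0 < f.natDegree)
    (hα : Polynomial.aeval α f = 0) (n : ℕ) :
    ∃ g : Polynomial ℤ, g.degree < f.natDegree ∧
      Polynomial.aeval α g = (f.leadingCoeff : ℝ) ^ n * α ^ n ∧
      ∀ l, |(g.coeff l : ℝ)| ≤ (2 * f.supNorm) ^ n := by
  induction n with
  | zero =>
    refine ⟨1, by simpa using hf, by simp, fun l ↦ ?_⟩
    rw [Polynomial.coeff_one]
    split_ifs <;> simp
  | succ n ih =>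
    obtain ⟨g, hdeg, hg, hcoeff⟩ := ih
    obtain ⟨D, hD⟩ := Nat.exists_eq_succ_of_ne_zero hf.ne'
    refine ⟨Polynomial.C f.leadingCoeff * (g * Polynomial.X) - Polynomial.C (g.coeff D) * f,
      degree_leadingCoeff_mul_X_sub_lt hD hdeg, ?_, fun l ↦ ?_⟩
    · rw [map_sub, map_mul, map_mul, map_mul, Polynomial.aeval_C, Polynomial.aeval_X, hα, hg,
        algebraMap_int_eq, eq_intCast]
      ring
    · have hX : |((g * Polynomial.X).coeff l : ℝ)| ≤ (2 * f.supNorm) ^ n := by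
        rcases l with _ | l
        · simpa using pow_nonneg (mul_nonneg two_pos.le f.supNorm_nonneg) n
        · rw [Polynomial.coeff_mul_X]
          exact hcoeff l
      have hnorm (k : ℕ) : |(f.coeff k : ℝ)| ≤ f.supNorm := f.le_supNorm k
      rw [Polynomial.coeff_sub, Polynomial.coeff_C_mul, Polynomial.coeff_C_mul, Int.cast_sub,
        Int.cast_mul, Int.cast_mul]
      calc _ ≤ |(f.leadingCoeff : ℝ)| * |((g * Polynomial.X).coeff l : ℝ)| +
            |(g.coeff D : ℝ)| * |(f.coeff l : ℝ)| := by
            rw [← abs_mul, ← abs_mul]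
            exact abs_sub _ _
        _ ≤ f.supNorm * (2 * f.supNorm) ^ n + (2 * f.supNorm) ^ n * f.supNorm := by
            gcongr
            exacts [f.supNorm_nonneg, hnorm _,
              pow_nonneg (mul_nonneg two_pos.le f.supNorm_nonneg) n, hcoeff D, hnorm l]
        _ = (2 * f.supNorm) ^ (n + 1) := by ring

lemma one_le_supNorm (hf : 0 < f.natDegree) : 1 ≤ f.supNorm := by
  have hlead : f.leadingCoeff ≠ 0 :=
    Polynomial.leadingCoeff_ne_zero.2 (Polynomial.ne_zero_of_natDegree_gt hf)
  have hone : (1 : ℝ) ≤ |(f.leadingCoeff : ℝ)| := by exact_mod_cast Int.one_le_abs hlead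
  exact hone.trans (f.le_supNorm _)

lemma exists_aeval_eq_choose_mul_pow {σ : Type*} [Fintype σ] (hf : 0 < f.natDegree)
    (hα : Polynomial.aeval α f = 0) (i : σ →₀ ℕ) {D k : σ →₀ ℕ} (hk : k ≤ D) :
    ∃ g : Polynomial ℤ, g.degree < f.natDegree ∧
      Polynomial.aeval α g = (f.leadingCoeff : ℝ) ^ D.degree *
        ((∏ j, (k j).choose (i j) : ℕ) * α ^ (k - i).degree) ∧
      ∀ l, |(g.coeff l : ℝ)| ≤ (4 * f.supNorm) ^ D.degree := by
  obtain ⟨g, hdeg, hg, hcoeff⟩ := exists_aeval_eq_leadingCoeff_pow_mul_pow hf hα (k - i).degree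
  have hn : (k - i).degree ≤ D.degree := Finsupp.degree_mono (tsub_le_self.trans hk)
  have hone := one_le_supNorm hf
  have hlead : |(f.leadingCoeff : ℝ)| ≤ f.supNorm := f.le_supNorm _
  have hchoose : ((∏ j, (k j).choose (i j) : ℕ) : ℝ) ≤ 2 ^ D.degree := by
    rw [Finsupp.degree_eq_sum, ← Finset.prod_pow_eq_pow_sum]
    exact_mod_cast Finset.prod_le_prod' fun j _ ↦
      (Nat.choose_le_two_pow _ _).trans (Nat.pow_le_pow_right two_pos (hk j))
  set c : ℤ := (∏ j, (k j).choose (i j) : ℕ) * f.leadingCoeff ^ (D.degree - (k - i).degree) with hc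
  refine ⟨c • g, (Polynomial.degree_smul_le c g).trans_lt hdeg, ?_, fun l ↦ ?_⟩
  · rw [map_zsmul, hg, zsmul_eq_mul, ← pow_sub_mul_pow _ hn, hc]
    push_cast
    ring
  · rw [Polynomial.coeff_smul, smul_eq_mul, hc]
    push_cast
    rw [abs_mul, abs_mul, abs_pow]
    calc _ ≤ 2 ^ D.degree * f.supNorm ^ (D.degree - (k - i).degree) *
          (2 * f.supNorm) ^ (k - i).degree := by
          gcongr
          · rw [abs_of_nonneg (by positivity)]
            exact_mod_cast hchoose
          · exact hcoeff l
      _ ≤ 2 ^ D.degree * (2 * f.supNorm) ^ (D.degree - (k - i).degree) *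
          (2 * f.supNorm) ^ (k - i).degree := by
          gcongr
          linarith
      _ = (4 * f.supNorm) ^ D.degree := by
          rw [mul_assoc, pow_sub_mul_pow _ hn, ← mul_pow]
          congr 1
          ring

end ReductionModMinpoly

section Counting

lemma sum_exp_mul_half_sub_le {d : ℕ} (hd : 0 < d) (s : ℝ) :
    ∑ i ∈ Finset.range (d + 1), Real.exp (s * (1 / 2 - i * (d : ℝ)⁻¹)) ≤
      (d + 1) * Real.exp (s ^ 2 / 8) := by
  have hd₀ : (0 : ℝ) < d := by exact_mod_cast hd
  have hreflect : ∑ i ∈ Finset.range (d + 1), Real.exp (s * (1 / 2 - i * (d : ℝ)⁻¹)) =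
      ∑ i ∈ Finset.range (d + 1), Real.exp (-(s * (1 / 2 - i * (d : ℝ)⁻¹))) := by
    rw [← Finset.sum_range_reflect]
    refine Finset.sum_congr rfl fun i hi ↦ ?_
    rw [Nat.add_sub_cancel, Nat.cast_sub (Nat.lt_succ_iff.1 (Finset.mem_range.1 hi))]
    congr 1
    field
  have hcosh : ∑ i ∈ Finset.range (d + 1), Real.exp (s * (1 / 2 - i * (d : ℝ)⁻¹)) =
      ∑ i ∈ Finset.range (d + 1), Real.cosh (s * (1 / 2 - i * (d : ℝ)⁻¹)) := by
    simp only [Real.cosh_eq]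
    rw [← Finset.sum_div, Finset.sum_add_distrib, ← hreflect, add_self_div_two]
  have hle (i : ℕ) (hi : i ∈ Finset.range (d + 1)) :
      Real.cosh (s * (1 / 2 - i * (d : ℝ)⁻¹)) ≤ Real.exp (s ^ 2 / 8) := by
    refine (Real.cosh_le_exp_half_sq _).trans (Real.exp_le_exp.2 ?_)
    have hi' : (i : ℝ) * (d : ℝ)⁻¹ ≤ 1 := by
      rw [← div_eq_mul_inv, div_le_one hd₀]
      exact_mod_cast Nat.lt_succ_iff.1 (Finset.mem_range.1 hi)
    have hi₀ : 0 ≤ (i : ℝ) * (d : ℝ)⁻¹ := by positivity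
    rw [mul_pow]
    nlinarith [sq_nonneg s, mul_nonneg (sq_nonneg s) (mul_nonneg hi₀ (sub_nonneg.2 hi'))]
  rw [hcosh]
  simpa using Finset.sum_le_card_nsmul _ _ _ hle

variable {σ : Type*} [Fintype σ] [DecidableEq σ]

lemma sum_Iic_prod (D : σ →₀ ℕ) (g : σ → ℕ → ℝ) :
    ∑ i ∈ Finset.Iic D, ∏ j, g j (i j) = ∏ j, ∑ x ∈ Finset.range (D j + 1), g j x := by
  rw [Finset.prod_univ_sum]
  exact Finset.sum_equiv Finsupp.equivFunOnFinite (by simp [Finsupp.le_def])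
    fun _ _ ↦ rfl

lemma card_Iic_eq_prod (D : σ →₀ ℕ) : ((Finset.Iic D).card : ℝ) = ∏ j, (D j + 1 : ℝ) := by
  simpa using sum_Iic_prod D fun _ _ ↦ 1

/-- Chernoff's bound for the sum of independent variables uniform on `{0, 1/D j, …, 1}`, with
exponential parameter `2 * ε`. -/
lemma card_filter_weight_lt_le {D : σ →₀ ℕ} (hD : ∀ j, 0 < D j) {ε : ℝ} (hε : 0 ≤ ε) :
    (((Finset.Iic D).filter fun i ↦ Finsupp.weight (fun j ↦ (D j : ℝ)⁻¹) i <
      Fintype.card σ / 2 * (1 - ε)).card : ℝ) ≤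
      (Finset.Iic D).card * Real.exp (-(Fintype.card σ * ε ^ 2 / 2)) := by
  set m : ℝ := (Fintype.card σ : ℝ)
  have hexp (i : σ →₀ ℕ) (hi : Finsupp.weight (fun j ↦ (D j : ℝ)⁻¹) i < m / 2 * (1 - ε)) :
      1 ≤ Real.exp (-(m * ε ^ 2)) * ∏ j, Real.exp (2 * ε * (1 / 2 - i j * (D j : ℝ)⁻¹)) := by
    simp only [Finsupp.weight_eq_sum, nsmul_eq_mul] at hi
    rw [← Real.exp_sum, ← Real.exp_add, ← Finset.mul_sum, Finset.sum_sub_distrib]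
    refine Real.one_le_exp ?_
    rw [Finset.sum_const, Finset.card_univ, nsmul_eq_mul]
    nlinarith
  calc _ ≤ ∑ i ∈ Finset.Iic D,
        Real.exp (-(m * ε ^ 2)) * ∏ j, Real.exp (2 * ε * (1 / 2 - i j * (D j : ℝ)⁻¹)) := by
        rw [Finset.card_eq_sum_ones, Nat.cast_sum, Finset.sum_filter]
        gcongr with i
        split_ifs with hi
        · simpa using hexp i hi
        · positivity
    _ ≤ Real.exp (-(m * ε ^ 2)) * ∏ j, ((D j + 1) * Real.exp ((2 * ε) ^ 2 / 8)) := by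
        rw [← Finset.mul_sum,
          sum_Iic_prod D fun j x ↦ Real.exp (2 * ε * (1 / 2 - x * (D j : ℝ)⁻¹))]
        gcongr with j
        exact sum_exp_mul_half_sub_le (hD j) _
    _ = _ := by
        rw [Finset.prod_mul_distrib, ← card_Iic_eq_prod, Finset.prod_const, Finset.card_univ,
          ← Real.exp_nat_mul, mul_left_comm, ← Real.exp_add]
        congr 2
        ring

end Counting

section AuxiliaryPolynomial

lemma exists_int_vec_abs_le {r c : Type*} [Fintype r] [Fintype c] {M : Matrix r c ℤ} {B : ℝ}
    (hB : 1 ≤ B) (hM : ∀ i k, |(M i k : ℝ)| ≤ B) (hr : 0 < Fintype.card r)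
    (hrc : 2 * Fintype.card r ≤ Fintype.card c) :
    ∃ t : c → ℤ, t ≠ 0 ∧ M.mulVec t = 0 ∧ ∀ k, |(t k : ℝ)| ≤ Fintype.card c * B := by
  obtain ⟨t, ht, hMt, hnorm⟩ := Int.Matrix.exists_ne_zero_int_vec_norm_le M (by omega) hr
  refine ⟨t, ht, hMt, fun k ↦ ?_⟩
  let : SeminormedAddCommGroup (Matrix r c ℤ) := Matrix.seminormedAddCommGroup
  have hMB : max 1 ‖M‖ ≤ B := max_le hB ((Matrix.norm_le_iff (by linarith)).2 hM)
  have hr' : (0 : ℝ) < Fintype.card r := by exact_mod_cast hr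
  have hrc' : (2 : ℝ) * Fintype.card r ≤ Fintype.card c := by exact_mod_cast hrc
  have hcard : (1 : ℝ) ≤ Fintype.card c := by exact_mod_cast (by omega : 1 ≤ Fintype.card c)
  have hexp : (Fintype.card r : ℝ) / (Fintype.card c - Fintype.card r) ≤ 1 := by
    rw [div_le_one (by linarith)]
    linarith
  calc |(t k : ℝ)| ≤ ‖t‖ := norm_le_pi_norm t k
    _ ≤ (Fintype.card c * max 1 ‖M‖) ^ (1 : ℝ) :=
      hnorm.trans (Real.rpow_le_rpow_of_exponent_le
        (one_le_mul_of_one_le_of_one_le hcard (le_max_left ..)) hexp)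
    _ ≤ Fintype.card c * B := by
      rw [Real.rpow_one]
      gcongr

variable {σ : Type*} [DecidableEq σ] {D : σ →₀ ℕ}

/-- The polynomial with exponents bounded by `D` and prescribed coefficients. -/
noncomputable def boxPolynomial (t : Finset.Iic D → ℤ) : MvPolynomial σ ℤ :=
  ∑ k : Finset.Iic D, monomial (k : σ →₀ ℕ) (t k)

lemma coeff_boxPolynomial (t : Finset.Iic D → ℤ) (k : Finset.Iic D) :
    coeff k (boxPolynomial t) = t k := by
  simp [boxPolynomial, coeff_sum, coeff_monomial]

lemma boxPolynomial_ne_zero {t : Finset.Iic D → ℤ} (ht : t ≠ 0) : boxPolynomial t ≠ 0 := by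
  obtain ⟨k, hk⟩ := Function.ne_iff.1 ht
  exact ne_zero_iff.2 ⟨k, by rwa [coeff_boxPolynomial]⟩

lemma degreeOf_boxPolynomial_le (t : Finset.Iic D → ℤ) (j : σ) :
    degreeOf j (boxPolynomial t) ≤ D j := by
  refine degreeOf_le_iff.2 fun I hI ↦ ?_
  obtain ⟨k, -, hk⟩ := Finset.mem_biUnion.1 (support_sum hI)
  obtain rfl := Finset.mem_singleton.1 (support_monomial_subset hk)
  exact Finset.mem_Iic.1 k.2 j

lemma l1Norm_boxPolynomial_le {t : Finset.Iic D → ℤ} {B : ℝ} (ht : ∀ k, |(t k : ℝ)| ≤ B) :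
    l1Norm (boxPolynomial t) ≤ (Finset.Iic D).card * B := by
  refine (l1Norm_sum_le _ _).trans ?_
  simp only [l1Norm_monomial, Int.norm_eq_abs]
  simpa using Finset.sum_le_card_nsmul Finset.univ _ B fun k _ ↦ ht k

lemma coeff_translate_boxPolynomial [Fintype σ] (α : ℝ) (t : Finset.Iic D → ℤ) (i : σ →₀ ℕ) :
    coeff i (translate (fun _ ↦ α) (map (Int.castRingHom ℝ) (boxPolynomial t))) =
      ∑ k : Finset.Iic D,
        t k * ((∏ j, (k.1 j).choose (i j) : ℕ) * α ^ (k.1 - i).degree) := by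
  rw [coeff_translate]
  simp only [boxPolynomial, map_sum, map_monomial, mvHasseDeriv_monomial, eval_monomial,
    Finsupp.prod, Finset.prod_pow_eq_pow_sum, Finsupp.degree_apply, eq_intCast]
  exact Finset.sum_congr rfl fun k _ ↦ by ring

lemma coeff_translate_boxPolynomial_eq_zero [Fintype σ] {f : Polynomial ℤ} {α : ℝ} (hf : f ≠ 0)
    {t : Finset.Iic D → ℤ} {i : σ →₀ ℕ} {g : Finset.Iic D → Polynomial ℤ}
    (hdeg : ∀ k, (g k).degree < f.natDegree)
    (hg : ∀ k, Polynomial.aeval α (g k) = (f.leadingCoeff : ℝ) ^ D.degree *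
      ((∏ j, (k.1 j).choose (i j) : ℕ) * α ^ (k.1 - i).degree))
    (ht : ∀ l < f.natDegree, ∑ k, (g k).coeff l * t k = 0) :
    coeff i (translate (fun _ ↦ α) (map (Int.castRingHom ℝ) (boxPolynomial t))) = 0 := by
  have hsum : ∑ k, t k • g k = 0 := by
    ext l
    simp only [Polynomial.finsetSum_coeff, Polynomial.coeff_smul, smul_eq_mul,
      Polynomial.coeff_zero]
    rcases lt_or_ge l f.natDegree with hl | hl
    · simpa only [mul_comm] using ht l hl
    · refine Finset.sum_eq_zero fun k _ ↦ ?_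
      rw [(Polynomial.degree_lt_iff_coeff_zero _ _).1 (hdeg k) l hl, mul_zero]
  have heval := congrArg (Polynomial.aeval α) hsum
  simp only [map_sum, map_zsmul, hg, map_zero] at heval
  simp only [zsmul_eq_mul, mul_left_comm _ (_ ^ D.degree)] at heval
  rw [← Finset.mul_sum, ← coeff_translate_boxPolynomial] at heval
  refine (mul_eq_zero.1 heval).resolve_left (pow_ne_zero _ ?_)
  exact_mod_cast Polynomial.leadingCoeff_ne_zero.2 hf

lemma coeff_translate_boxPolynomial_eq_zero_of_not_le [Finite σ] {α : ℝ} (t : Finset.Iic D → ℤ)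
    {i : σ →₀ ℕ} (hi : ¬i ≤ D) :
    coeff i (translate (fun _ ↦ α) (map (Int.castRingHom ℝ) (boxPolynomial t))) = 0 := by
  cases nonempty_fintype σ
  rw [Finsupp.le_def, not_forall] at hi
  obtain ⟨j, hj⟩ := hi
  rw [coeff_translate_boxPolynomial]
  refine Finset.sum_eq_zero fun k _ ↦ ?_
  have hkj : k.1 j ≤ D j := Finset.mem_Iic.1 k.2 j
  rw [Finset.prod_eq_zero (Finset.mem_univ j) (Nat.choose_eq_zero_of_lt (by omega))]
  simp

/-- This is Siegel's lemma: the vanishing of a derivative at `(α, …, α)` is a linear condition over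
`ℤ[α]`, hence amounts to `f.natDegree` conditions over `ℤ`. -/
lemma exists_boxPolynomial_mem_indexGE [Finite σ] {f : Polynomial ℤ} {α : ℝ}
    (hf : 0 < f.natDegree) (hα : Polynomial.aeval α f = 0) {w : σ → ℝ} {θ : ℝ} (hθ : 0 < θ)
    (hcard : 2 * (((Finset.Iic D).filter fun i ↦ Finsupp.weight w i < θ).card * f.natDegree) ≤
      (Finset.Iic D).card) :
    ∃ t : Finset.Iic D → ℤ, t ≠ 0 ∧
      (∀ k, |(t k : ℝ)| ≤ (Finset.Iic D).card * (4 * f.supNorm) ^ D.degree) ∧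
      translate (fun _ ↦ α) (map (Int.castRingHom ℝ) (boxPolynomial t)) ∈ indexGE ℝ w θ := by
  cases nonempty_fintype σ
  choose g hdeg hg hcoeff using fun (i : σ →₀ ℕ) (k : Finset.Iic D) ↦
    exists_aeval_eq_choose_mul_pow hf hα i (Finset.mem_Iic.1 k.2)
  set S := (Finset.Iic D).filter fun i ↦ Finsupp.weight w i < θ with hS
  let M : Matrix (S × Fin f.natDegree) (Finset.Iic D) ℤ := fun il k ↦ (g il.1 k).coeff il.2
  have hrow : Fintype.card (S × Fin f.natDegree) = S.card * f.natDegree := by simp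
  have h0S : (0 : σ →₀ ℕ) ∈ S := by simpa [hS] using hθ
  have hB : 1 ≤ (4 * f.supNorm) ^ D.degree := one_le_pow₀ (by linarith [one_le_supNorm hf])
  obtain ⟨t, ht, hMt, htB⟩ := exists_int_vec_abs_le (M := M) hB (fun il k ↦ hcoeff _ _ _)
    (hrow ▸ Nat.mul_pos (Finset.card_pos.2 ⟨0, h0S⟩) hf) (by rwa [hrow, Fintype.card_coe])
  refine ⟨t, ht, by simpa using htB, mem_indexGE.2 fun i ↦ not_imp_comm.1 fun hi ↦ ?_⟩
  by_cases hiD : i ≤ D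
  · have hiS : i ∈ S := Finset.mem_filter.2 ⟨Finset.mem_Iic.2 hiD, not_le.1 hi⟩
    exact coeff_translate_boxPolynomial_eq_zero (Polynomial.ne_zero_of_natDegree_gt hf) (hdeg i)
      (hg i) fun l hl ↦ congrFun hMt (⟨i, hiS⟩, ⟨l, hl⟩)
  · exact coeff_translate_boxPolynomial_eq_zero_of_not_le t hiD

lemma card_Iic_le_two_pow [Finite σ] (D : σ →₀ ℕ) : ((Finset.Iic D).card : ℝ) ≤ 2 ^ D.degree := by
  cases nonempty_fintype σ
  rw [card_Iic_eq_prod, Finsupp.degree_eq_sum, ← Finset.prod_pow_eq_pow_sum]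
  gcongr with j
  exact_mod_cast Nat.lt_two_pow_self

lemma exists_auxiliaryPolynomial {σ : Type*} [Fintype σ] {D : σ →₀ ℕ} {f : Polynomial ℤ} {α : ℝ}
    (hf : 0 < f.natDegree) (hα : Polynomial.aeval α f = 0) (hD : ∀ j, 0 < D j)
    {ε : ℝ} (hε : 0 ≤ ε) (hε1 : ε < 1)
    (hexp : 2 * (f.natDegree : ℝ) ≤ Real.exp (Fintype.card σ * ε ^ 2 / 2)) :
    ∃ P : MvPolynomial σ ℤ, P ≠ 0 ∧ (∀ j, degreeOf j P ≤ D j) ∧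
      Real.log (l1Norm P) ≤ D.degree * Real.log (16 * f.supNorm) ∧
      translate (fun _ ↦ α) (map (Int.castRingHom ℝ) P) ∈
        indexGE ℝ (fun j ↦ (D j : ℝ)⁻¹) (Fintype.card σ / 2 * (1 - ε)) := by
  classical
  have hf1 : (1 : ℝ) ≤ f.natDegree := by exact_mod_cast hf
  have hσ : (0 : ℝ) < Fintype.card σ := by
    refine (Nat.cast_nonneg _).lt_of_ne' fun h ↦ ?_
    rw [h, zero_mul, zero_div, Real.exp_zero] at hexp
    linarith
  obtain ⟨t, ht, htB, hindex⟩ := exists_boxPolynomial_mem_indexGE (D := D) hf hα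
    (w := fun j ↦ (D j : ℝ)⁻¹) (θ := Fintype.card σ / 2 * (1 - ε))
    (mul_pos (half_pos hσ) (sub_pos.2 hε1)) <| by
      rw [← Nat.cast_le (α := ℝ)]
      push_cast
      calc _ = (((Finset.Iic D).filter fun i ↦ Finsupp.weight (fun j ↦ (D j : ℝ)⁻¹) i <
              Fintype.card σ / 2 * (1 - ε)).card : ℝ) * (2 * f.natDegree) := by ring
        _ ≤ (Finset.Iic D).card * Real.exp (-(Fintype.card σ * ε ^ 2 / 2)) *
            Real.exp (Fintype.card σ * ε ^ 2 / 2) := by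
          gcongr
          exact card_filter_weight_lt_le hD hε
        _ = (Finset.Iic D).card := by
          rw [mul_assoc, ← Real.exp_add, neg_add_cancel, Real.exp_zero, mul_one]
  have hP := boxPolynomial_ne_zero ht
  refine ⟨boxPolynomial t, hP, degreeOf_boxPolynomial_le t, ?_, hindex⟩
  have hnorm : l1Norm (boxPolynomial t) ≤ (16 * f.supNorm) ^ D.degree :=
    calc _ ≤ 2 ^ D.degree * (2 ^ D.degree * (4 * f.supNorm) ^ D.degree) := by
          refine (l1Norm_boxPolynomial_le htB).trans ?_
          have := f.supNorm_nonneg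
          gcongr <;> exact card_Iic_le_two_pow D
      _ = (16 * f.supNorm) ^ D.degree := by
          rw [← mul_pow, ← mul_pow]
          ring
  rw [← Real.log_pow]
  exact Real.log_le_log (zero_lt_one.trans_le (one_le_l1Norm hP)) hnorm

end AuxiliaryPolynomial

section Translate

variable {σ R : Type*} [CommRing R]

lemma eval_translate (x z : σ → R) (f : MvPolynomial σ R) :
    eval z (translate x f) = eval (z + x) f := by
  rw [translate, aeval_def, eval_eval₂, ← eval₂_id]
  congr 1
  · ext
    simp
  · ext j
    simp

lemma degreeOf_translate_le [Finite σ] (x : σ → R) (f : MvPolynomial σ R) (j : σ) :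
    degreeOf j (translate x f) ≤ degreeOf j f := by
  cases nonempty_fintype σ
  refine degreeOf_le_iff.2 fun i hi ↦ ?_
  by_contra! hlt
  refine mem_support_iff.1 hi ?_
  suffices mvHasseDeriv i f = 0 by rw [coeff_translate, this, map_zero]
  ext k
  rw [coeff_mvHasseDeriv, coeff_zero]
  suffices coeff (k + i) f = 0 by rw [this, mul_zero]
  by_contra hki
  exact (monomial_le_degreeOf j (mem_support_iff.2 hki)).not_gt
    (hlt.trans_le (Nat.le_add_left _ _))

end Translate

section MultihomogeneousForm

variable {σ : Type*} [Fintype σ] [DecidableEq σ] {R : Type*} [CommRing R]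

/-- The value at `(x, y)` of the multihomogeneous form of multidegree `D` attached to a polynomial
`f` with `degreeOf j f ≤ D j`; in a field it is `(∏ j, x j ^ D j) * f (y / x)`. -/
noncomputable def multihomEval (D : σ →₀ ℕ) (f : MvPolynomial σ R) (x y : σ → R) : R :=
  ∑ i ∈ Finset.Iic D, coeff i f * ∏ j, (x j ^ (D j - i j) * y j ^ i j)

lemma map_multihomEval {S : Type*} [CommRing S] (φ : R →+* S) (D : σ →₀ ℕ)
    (f : MvPolynomial σ ℤ) (x y : σ → R) :
    φ (multihomEval D (map (Int.castRingHom R) f) x y) =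
      multihomEval D (map (Int.castRingHom S) f) (fun j ↦ φ (x j)) fun j ↦ φ (y j) := by
  simp only [multihomEval, map_sum, map_mul, map_prod, map_pow, coeff_map, eq_intCast, map_intCast]

lemma multihomEval_mem {S : Subring R} (D : σ →₀ ℕ) (f : MvPolynomial σ ℤ) {x y : σ → R}
    (hx : ∀ j, x j ∈ S) (hy : ∀ j, y j ∈ S) :
    multihomEval D (map (Int.castRingHom R) f) x y ∈ S := by
  refine S.sum_mem fun i _ ↦ S.mul_mem ?_ (S.prod_mem fun j _ ↦
    S.mul_mem (S.pow_mem (hx j) _) (S.pow_mem (hy j) _))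
  rw [coeff_map]
  exact intCast_mem S _

lemma multihomEval_eq_prod_mul_eval {K : Type*} [Field K] {D : σ →₀ ℕ} {f : MvPolynomial σ K}
    (hf : ∀ j, degreeOf j f ≤ D j) {x : σ → K} (hx : ∀ j, x j ≠ 0) (y : σ → K) :
    multihomEval D f x y = (∏ j, x j ^ D j) * eval (fun j ↦ y j / x j) f := by
  have hsupp : f.support ⊆ Finset.Iic D := fun i hi ↦
    Finset.mem_Iic.2 fun j ↦ degreeOf_le_iff.1 (hf j) i hi
  rw [multihomEval, eval_eq', Finset.mul_sum, Finset.sum_subset hsupp fun i _ hi ↦ by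
    rw [notMem_support_iff.1 hi, zero_mul, mul_zero]]
  refine Finset.sum_congr rfl fun i hi ↦ ?_
  rw [mul_left_comm, ← Finset.prod_mul_distrib]
  congr 1
  refine Finset.prod_congr rfl fun j _ ↦ ?_
  rw [pow_sub₀ _ (hx j) (Finset.mem_Iic.1 hi j), div_pow, mul_assoc, mul_comm (x j ^ i j)⁻¹,
    div_eq_mul_inv]

lemma multihomEval_translate {K : Type*} [Field K] {D : σ →₀ ℕ} {f : MvPolynomial σ K}
    (hf : ∀ j, degreeOf j f ≤ D j) {x : σ → K} (hx : ∀ j, x j ≠ 0) (y : σ → K) (α : K) :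
    multihomEval D (translate (fun _ ↦ α) f) x (fun j ↦ y j - α * x j) =
      multihomEval D f x y := by
  rw [multihomEval_eq_prod_mul_eval hf hx,
    multihomEval_eq_prod_mul_eval (fun j ↦ (degreeOf_translate_le _ f j).trans (hf j)) hx,
    eval_translate]
  congr 3
  funext j
  rw [Pi.add_apply, sub_div, mul_div_cancel_right₀ _ (hx j), sub_add_cancel]

end MultihomogeneousForm

section PlaceBound

variable {σ : Type*}

lemma abs_eval_map_le [Finite σ] {D : σ →₀ ℕ} {f : MvPolynomial σ ℤ}
    (hf : ∀ j, degreeOf j f ≤ D j) {α A : ℝ} (hA : 1 ≤ A) (hα : |α| ≤ A) :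
    |eval (fun _ ↦ α) (map (Int.castRingHom ℝ) f)| ≤ A ^ D.degree * l1Norm f := by
  cases nonempty_fintype σ
  rw [eval_map, eval₂_eq', l1Norm, Finset.mul_sum]
  refine (Finset.abs_sum_le_sum_abs _ _).trans (Finset.sum_le_sum fun i hi ↦ ?_)
  rw [abs_mul, mul_comm, eq_intCast, ← Int.norm_cast_real, Real.norm_eq_abs,
    Finset.prod_pow_eq_pow_sum, abs_pow, Finsupp.degree_eq_sum]
  gcongr
  calc |α| ^ ∑ j, i j ≤ A ^ ∑ j, i j := by gcongr
    _ ≤ A ^ ∑ j, D j := by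
      gcongr with j
      exact degreeOf_le_iff.1 (hf j) i hi

lemma abs_coeff_translate_le [Finite σ] {D : σ →₀ ℕ} {f : MvPolynomial σ ℤ}
    (hf : ∀ j, degreeOf j f ≤ D j) {α A : ℝ} (hA : 1 ≤ A) (hα : |α| ≤ A) (i : σ →₀ ℕ) :
    |coeff i (translate (fun _ ↦ α) (map (Int.castRingHom ℝ) f))| ≤
      (2 * A) ^ D.degree * l1Norm f := by
  cases nonempty_fintype σ
  rw [coeff_translate, ← map_mvHasseDeriv]
  refine (abs_eval_map_le (fun j ↦ (degreeOf_mvHasseDeriv_le i f j).trans (hf j)) hA hα).trans ?_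
  calc A ^ D.degree * l1Norm (mvHasseDeriv i f) ≤ A ^ D.degree * (2 ^ D.degree * l1Norm f) := by
        rw [Finsupp.degree_eq_sum D]
        gcongr
        exact l1Norm_mvHasseDeriv_le i hf
    _ = (2 * A) ^ D.degree * l1Norm f := by rw [mul_pow]; ring

lemma abs_pow_mul_pow_le {x y C L ρ : ℝ} (hx : |x| ≤ C * Real.exp L)
    (hy : |y| ≤ C * Real.exp (-ρ * L)) {d i : ℕ} (hi : i ≤ d) :
    |x ^ (d - i) * y ^ i| ≤ C ^ d * Real.exp (d * L - (1 + ρ) * (i * L)) := by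
  obtain ⟨k, rfl⟩ := Nat.exists_eq_add_of_le hi
  rw [Nat.add_sub_cancel_left, abs_mul, abs_pow, abs_pow]
  have hC : 0 ≤ C * Real.exp L := (abs_nonneg _).trans hx
  calc |x| ^ k * |y| ^ i ≤ (C * Real.exp L) ^ k * (C * Real.exp (-ρ * L)) ^ i := by gcongr
    _ = C ^ (i + k) * (Real.exp (k * L) * Real.exp (i * (-ρ * L))) := by
        rw [mul_pow, mul_pow, ← Real.exp_nat_mul, ← Real.exp_nat_mul, pow_add]
        ring
    _ = C ^ (i + k) * Real.exp ((i + k : ℕ) * L - (1 + ρ) * (i * L)) := by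
        rw [← Real.exp_add]
        push_cast
        ring_nf

lemma mul_weight_inv_le [Fintype σ] {D i : σ →₀ ℕ} (hD : ∀ j, 0 < D j) {L : σ → ℝ} {T : ℝ}
    (hT : ∀ j, T ≤ D j * L j) :
    T * Finsupp.weight (fun j ↦ (D j : ℝ)⁻¹) i ≤ ∑ j, i j * L j := by
  rw [Finsupp.weight_apply, Finsupp.sum_fintype _ _ (by simp), Finset.mul_sum]
  refine Finset.sum_le_sum fun j _ ↦ ?_
  have hj : (0 : ℝ) < D j := by exact_mod_cast hD j
  rw [nsmul_eq_mul, ← div_eq_mul_inv, mul_div_left_comm]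
  gcongr
  exact (div_le_iff₀' hj).2 (hT j)

lemma abs_multihomEval_le [Fintype σ] [DecidableEq σ] {D : σ →₀ ℕ} (hD : ∀ j, 0 < D j)
    {g : MvPolynomial σ ℝ} {x y L : σ → ℝ} {B C ρ T τ : ℝ} (hC : 0 ≤ C)
    (hB : ∀ i, |coeff i g| ≤ B) (hρ : 0 ≤ 1 + ρ) (hT : 0 ≤ T)
    (hx : ∀ j, |x j| ≤ C * Real.exp (L j)) (hy : ∀ j, |y j| ≤ C * Real.exp (-ρ * L j))
    (hTL : ∀ j, T ≤ D j * L j) (hg : g ∈ indexGE ℝ (fun j ↦ (D j : ℝ)⁻¹) τ) :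
    |multihomEval D g x y| ≤
      (2 * C) ^ D.degree * B * Real.exp (∑ j, D j * L j - (1 + ρ) * (T * τ)) := by
  have hB0 : 0 ≤ B := (abs_nonneg _).trans (hB 0)
  have hmonomial (i : σ →₀ ℕ) (hi : i ∈ Finset.Iic D) :
      |coeff i g * ∏ j, (x j ^ (D j - i j) * y j ^ i j)| ≤
        C ^ D.degree * B * Real.exp (∑ j, D j * L j - (1 + ρ) * (T * τ)) := by
    by_cases hgi : coeff i g = 0
    · rw [hgi, zero_mul, abs_zero]
      positivity
    calc |coeff i g * ∏ j, (x j ^ (D j - i j) * y j ^ i j)|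
        ≤ B * ∏ j, (C ^ D j * Real.exp (D j * L j - (1 + ρ) * (i j * L j))) := by
          rw [abs_mul, Finset.abs_prod]
          gcongr with j
          exacts [hB i, abs_pow_mul_pow_le (hx j) (hy j) (Finset.mem_Iic.1 hi j)]
      _ = C ^ D.degree * B *
          Real.exp (∑ j, D j * L j - (1 + ρ) * ∑ j, i j * L j) := by
          rw [Finset.prod_mul_distrib, Finset.prod_pow_eq_pow_sum, ← Real.exp_sum,
            Finset.sum_sub_distrib, ← Finset.mul_sum, Finsupp.degree_eq_sum]
          ring
      _ ≤ C ^ D.degree * B * Real.exp (∑ j, D j * L j - (1 + ρ) * (T * τ)) := by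
          gcongr
          refine (mul_le_mul_of_nonneg_left ?_ hT).trans (mul_weight_inv_le hD hTL)
          exact mem_indexGE.1 hg i hgi
  calc |multihomEval D g x y| ≤ ∑ _ ∈ Finset.Iic D,
        C ^ D.degree * B * Real.exp (∑ j, D j * L j - (1 + ρ) * (T * τ)) :=
        (Finset.abs_sum_le_sum_abs _ _).trans (Finset.sum_le_sum hmonomial)
    _ ≤ 2 ^ D.degree * (C ^ D.degree * B *
        Real.exp (∑ j, D j * L j - (1 + ρ) * (T * τ))) := by
        rw [Finset.sum_const, nsmul_eq_mul]
        gcongr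
        exact card_Iic_le_two_pow D
    _ = _ := by rw [mul_pow]; ring

lemma degreeOf_map_le {R S : Type*} [CommSemiring R] [CommSemiring S] (φ : R →+* S)
    (f : MvPolynomial σ R) (j : σ) : degreeOf j (map φ f) ≤ degreeOf j f :=
  degreeOf_le_iff.2 fun _ hi ↦ monomial_le_degreeOf j (support_map_subset φ f hi)

/-- The derivative of order `I` loses the weight of `I` from the index at `α`. -/
lemma abs_multihomEval_mvHasseDeriv_le [Fintype σ] [DecidableEq σ] {D : σ →₀ ℕ}
    (hD : ∀ j, 0 < D j) {P : MvPolynomial σ ℤ} (hdeg : ∀ j, degreeOf j P ≤ D j)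
    {x y L : σ → ℝ} {α A C ρ T τ θ : ℝ} (hA : 1 ≤ A) (hα : |α| ≤ A) (hC : 0 ≤ C) (hρ : 0 ≤ 1 + ρ)
    (hT : 0 ≤ T) (hx0 : ∀ j, x j ≠ 0) (hx : ∀ j, |x j| ≤ C * Real.exp (L j))
    (hy : ∀ j, |y j - α * x j| ≤ C * Real.exp (-ρ * L j)) (hTL : ∀ j, T ≤ D j * L j)
    (hτ : translate (fun _ ↦ α) (map (Int.castRingHom ℝ) P) ∈ indexGE ℝ (fun j ↦ (D j : ℝ)⁻¹) τ)
    {I : σ →₀ ℕ} (hI : Finsupp.weight (fun j ↦ (D j : ℝ)⁻¹) I ≤ θ) :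
    |multihomEval D (map (Int.castRingHom ℝ) (mvHasseDeriv I P)) x y| ≤
      (8 * A * C) ^ D.degree * l1Norm P *
        Real.exp (∑ j, D j * L j - (1 + ρ) * (T * (τ - θ))) := by
  have hQ (j : σ) : degreeOf j (mvHasseDeriv I P) ≤ D j :=
    (degreeOf_mvHasseDeriv_le I P j).trans (hdeg j)
  have hindex : translate (fun _ ↦ α) (map (Int.castRingHom ℝ) (mvHasseDeriv I P)) ∈
      indexGE ℝ (fun j ↦ (D j : ℝ)⁻¹) (τ - θ) := by
    rw [map_mvHasseDeriv, translate_mvHasseDeriv]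
    exact indexGE_antitone (sub_le_sub_left hI τ) (mvHasseDeriv_mem_indexGE hτ I)
  have hcoeff : (2 * A) ^ D.degree * l1Norm (mvHasseDeriv I P) ≤
      (4 * A) ^ D.degree * l1Norm P :=
    calc _ ≤ (2 * A) ^ D.degree * (2 ^ D.degree * l1Norm P) := by
          rw [Finsupp.degree_eq_sum D]
          gcongr
          exact l1Norm_mvHasseDeriv_le I hdeg
      _ = (2 * A * 2) ^ D.degree * l1Norm P := by rw [mul_pow (2 * A)]; ring
      _ = (4 * A) ^ D.degree * l1Norm P := by ring_nf
  rw [← multihomEval_translate (fun j ↦ (degreeOf_map_le _ _ j).trans (hQ j)) hx0 y α]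
  refine (abs_multihomEval_le hD hC (fun i ↦ (abs_coeff_translate_le hQ hA hα i).trans hcoeff)
    hρ hT hx hy hTL hindex).trans_eq ?_
  rw [← mul_assoc, ← mul_pow]
  ring_nf

end PlaceBound

section Approximant

/-- An approximation `num / den` to `α` with numerator and denominator in an order `S ⊆ ℝ × ℝ`
with two real places. Its quality is that of exponent `2 + 2 * κ` at the first place and that of
exponent `2` at the second one, relative to the height `exp height`. -/
structure Approximant (S : Subring (ℝ × ℝ)) (α κ C : ℝ) where
  num : ℝ × ℝ
  den : ℝ × ℝ
  height : ℝ
  num_mem : num ∈ S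
  den_mem : den ∈ S
  den_fst_ne_zero : den.1 ≠ 0
  abs_den_fst_le : |den.1| ≤ C * Real.exp height
  abs_den_snd_le : |den.2| ≤ C * Real.exp height
  abs_sub_fst_le : |num.1 - α * den.1| ≤ C * Real.exp (-(1 + 2 * κ) * height)
  abs_sub_snd_le : |num.2 - α * den.2| ≤ C * Real.exp (-1 * height)
  rootMultBound : RootMultBound (num.1 / den.1) height

variable {S : Subring (ℝ × ℝ)} {α κ C : ℝ} {σ : Type*} [Fintype σ]

lemma Approximant.den_snd_ne_zero (hS : ∀ z ∈ S, z.1 ≠ 0 → 1 ≤ |z.1| * |z.2|)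
    (A : Approximant S α κ C) : A.den.2 ≠ 0 := by
  have hpos : 0 < |A.den.1| * |A.den.2| :=
    one_pos.trans_le (hS _ A.den_mem A.den_fst_ne_zero)
  exact abs_ne_zero.1 (right_ne_zero_of_mul hpos.ne')

lemma one_le_abs_multihomEval_mul_abs_multihomEval [DecidableEq σ]
    (hS : ∀ z ∈ S, z.1 ≠ 0 → 1 ≤ |z.1| * |z.2|) {x y : σ → ℝ × ℝ} (hxS : ∀ j, x j ∈ S)
    (hyS : ∀ j, y j ∈ S) (hx : ∀ j, (x j).1 ≠ 0) {D : σ →₀ ℕ} {f : MvPolynomial σ ℤ}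
    (hf : ∀ j, degreeOf j f ≤ D j)
    (hne : eval (fun j ↦ (y j).1 / (x j).1) (map (Int.castRingHom ℝ) f) ≠ 0) :
    1 ≤ |multihomEval D (map (Int.castRingHom ℝ) f) (fun j ↦ (x j).1) fun j ↦ (y j).1| *
      |multihomEval D (map (Int.castRingHom ℝ) f) (fun j ↦ (x j).2) fun j ↦ (y j).2| := by
  have hfst := map_multihomEval (RingHom.fst ℝ ℝ) D f x y
  have hsnd := map_multihomEval (RingHom.snd ℝ ℝ) D f x y
  simp only [RingHom.coe_fst, RingHom.coe_snd] at hfst hsnd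
  rw [← hfst, ← hsnd]
  refine hS _ (multihomEval_mem D f hxS hyS) ?_
  rw [hfst, multihomEval_eq_prod_mul_eval (fun j ↦ (degreeOf_map_le _ f j).trans (hf j)) hx]
  exact mul_ne_zero (Finset.prod_ne_zero_iff.2 fun j _ ↦ pow_ne_zero _ (hx j)) hne

/-- The index inequality of the Thue–Siegel–Roth method: the value of a derivative of `P` at the
approximants is a nonzero element of `S`, so its norm is at least one, while both of its
conjugates are small when the index of `P` at `α` is large. -/
lemma Approximant.index_inequality (hS : ∀ z ∈ S, z.1 ≠ 0 → 1 ≤ |z.1| * |z.2|) (hκ : 0 ≤ κ)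
    (hC : 1 ≤ C) (A : σ → Approximant S α κ C) {D : σ →₀ ℕ} (hD : ∀ j, 0 < D j)
    {P : MvPolynomial σ ℤ} (hP : P ≠ 0) (hdeg : ∀ j, degreeOf j P ≤ D j) {T τ θ : ℝ} (hT : 0 ≤ T)
    (hTA : ∀ j, T ≤ D j * (A j).height)
    (hτ : translate (fun _ ↦ α) (map (Int.castRingHom ℝ) P) ∈ indexGE ℝ (fun j ↦ (D j : ℝ)⁻¹) τ)
    {I : σ →₀ ℕ} (hI : Finsupp.weight (fun j ↦ (D j : ℝ)⁻¹) I ≤ θ)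
    (hne : coeff I (translate (fun j ↦ (A j).num.1 / (A j).den.1)
      (map (Int.castRingHom ℝ) P)) ≠ 0) :
    (2 + κ) * (T * (τ - θ)) ≤ D.degree * Real.log (8 * max 1 |α| * C) + Real.log (l1Norm P) +
      ∑ j, D j * (A j).height := by
  classical
  set W := (8 * max 1 |α| * C) ^ D.degree * l1Norm P with hW
  set M := ∑ j, D j * (A j).height
  have hl : 0 < l1Norm P := one_pos.trans_le (one_le_l1Norm hP)
  have hWpos : 0 < W := by positivity
  have hnorm := one_le_abs_multihomEval_mul_abs_multihomEval hS (fun j ↦ (A j).den_mem)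
    (fun j ↦ (A j).num_mem) (fun j ↦ (A j).den_fst_ne_zero)
    (fun j ↦ (degreeOf_mvHasseDeriv_le I P j).trans (hdeg j)) <| by
      rwa [map_mvHasseDeriv, ← coeff_translate]
  have hfst := abs_multihomEval_mvHasseDeriv_le hD hdeg (le_max_left 1 |α|) (le_max_right 1 |α|)
    (by linarith) (by linarith) hT (fun j ↦ (A j).den_fst_ne_zero) (fun j ↦ (A j).abs_den_fst_le)
    (fun j ↦ (A j).abs_sub_fst_le) hTA hτ hI
  have hsnd := abs_multihomEval_mvHasseDeriv_le hD hdeg (le_max_left 1 |α|) (le_max_right 1 |α|)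
    (by linarith) (by linarith) hT (fun j ↦ (A j).den_snd_ne_zero hS)
    (fun j ↦ (A j).abs_den_snd_le) (fun j ↦ (A j).abs_sub_snd_le) hTA hτ hI
  have hlog : 0 ≤ Real.log (W * Real.exp (M - (1 + (1 + 2 * κ)) * (T * (τ - θ))) *
      (W * Real.exp (M - (1 + 1) * (T * (τ - θ))))) :=
    Real.log_nonneg (hnorm.trans (by gcongr))
  rw [Real.log_mul (by positivity) (by positivity), Real.log_mul hWpos.ne' (Real.exp_ne_zero _),
    Real.log_mul hWpos.ne' (Real.exp_ne_zero _), Real.log_exp, Real.log_exp, hW,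
    Real.log_mul (by positivity) hl.ne', Real.log_pow] at hlog
  linarith

end Approximant

section ChoiceOfParameters

lemma exists_lacunary {X : Type*} {L : X → ℝ} (hL : ∀ H, ∃ x, H ≤ L x) (H c : ℝ) (m : ℕ) :
    ∃ x : Fin m → X, (∀ j, H ≤ L (x j)) ∧ ∀ j k, j < k → c * L (x k) ≤ L (x j) := by
  induction m with
  | zero => exact ⟨Fin.elim0, fun j ↦ j.elim0, fun j ↦ j.elim0⟩
  | succ m ih =>
    obtain ⟨x, hxH, hx⟩ := ih
    obtain ⟨B, hB⟩ := (Set.finite_range fun k ↦ c * L (x k)).bddAbove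
    obtain ⟨x₀, hx₀⟩ := hL (max H B)
    refine ⟨Fin.cons x₀ x, Fin.cases ((le_max_left H B).trans hx₀) hxH, ?_⟩
    refine Fin.cases (Fin.cases (fun h ↦ (lt_irrefl _ h).elim) fun k _ ↦ ?_)
      fun j ↦ Fin.cases (fun h ↦ (Fin.not_lt_zero _ h).elim) fun k hjk ↦ ?_
    · exact (hB ⟨k, rfl⟩).trans ((le_max_right H B).trans hx₀)
    · exact hx j k (Fin.succ_lt_succ_iff.1 hjk)

lemma exists_degree {L T : ℝ} (hL : 0 < L) (hLT : L ≤ T) :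
    ∃ d : ℕ, T ≤ d * L ∧ d * L ≤ T + L := by
  refine ⟨⌈T / L⌉₊, (div_le_iff₀ hL).1 (Nat.le_ceil _), ?_⟩
  have := (Nat.ceil_lt_add_one (div_nonneg (hL.le.trans hLT) hL.le)).le
  calc ⌈T / L⌉₊ * L ≤ (T / L + 1) * L := by gcongr
    _ = T + L := by field_simp

lemma exists_degrees {ι : Type*} [Fintype ι] {L : ι → ℝ} (hL : ∀ j, 0 < L j) {δ : ℝ}
    (hδ : 0 < δ) :
    ∃ (d : ι → ℕ) (T : ℝ), 0 < T ∧ (∀ j, T ≤ d j * L j) ∧ (∀ j, d j * L j ≤ 2 * T) ∧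
      ∑ j, d j * L j ≤ (Fintype.card ι + δ) * T := by
  set T := (1 + 1 / δ) * ∑ j, L j + 1 with hT
  have hsum : 0 ≤ ∑ j, L j := Finset.sum_nonneg fun j _ ↦ (hL j).le
  have hLT (j : ι) : L j ≤ T := by
    have := Finset.single_le_sum (fun j _ ↦ (hL j).le) (Finset.mem_univ j)
    have : 0 ≤ 1 / δ * ∑ j, L j := by positivity
    linarith
  have hsumδ : ∑ j, L j ≤ δ * T := by
    have : δ * T = δ * ∑ j, L j + ∑ j, L j + δ := by
      rw [hT]
      field_simp
    nlinarith
  choose d hTd hdT using fun j ↦ exists_degree (hL j) (hLT j)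
  refine ⟨d, T, by positivity, hTd, fun j ↦ by linarith [hdT j, hLT j], ?_⟩
  calc ∑ j, d j * L j ≤ ∑ j, (T + L j) := Finset.sum_le_sum fun j _ ↦ hdT j
    _ = Fintype.card ι * T + ∑ j, L j := by simp [Finset.sum_add_distrib]
    _ ≤ (Fintype.card ι + δ) * T := by linarith

lemma exists_lacunary_degrees {X : Type*} {L : X → ℝ} (hL : ∀ H, ∃ x, H ≤ L x) (m : ℕ) {η δ : ℝ}
    (hη : 0 < η) (hδ : 0 < δ) :
    ∃ (x : Fin m → X) (d : Fin m → ℕ) (T : ℝ), 0 < T ∧ (∀ j, 0 < d j) ∧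
      (∀ j k, j < k → (d j : ℝ) ≤ η * d k) ∧ (∀ j, T ≤ d j * L (x j)) ∧
      ∑ j, d j * L (x j) ≤ (m + δ) * T ∧ ∑ j, (d j : ℝ) ≤ δ * T := by
  obtain ⟨x, hxH, hx⟩ := exists_lacunary hL (2 * m / δ + 1) (2 / η) m
  have hpos (j : Fin m) : 0 < L (x j) := lt_of_lt_of_le (by positivity) (hxH j)
  obtain ⟨d, T, hT, hTd, hdT, hsum⟩ := exists_degrees hpos hδ
  rw [Fintype.card_fin] at hsum
  refine ⟨x, d, T, hT, fun j ↦ ?_, fun j k hjk ↦ ?_, hTd, hsum, ?_⟩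
  · refine Nat.pos_of_ne_zero fun h ↦ (hTd j).not_gt ?_
    rwa [h, Nat.cast_zero, zero_mul]
  · refine le_of_mul_le_mul_right ?_ (hpos j)
    calc d j * L (x j) ≤ 2 * (d k * L (x k)) := by linarith [hdT j, hTd k]
      _ = η * d k * (2 / η * L (x k)) := by field_simp
      _ ≤ η * d k * L (x j) := by
        gcongr
        exact hx j k hjk
  · refine le_of_mul_le_mul_right ?_ (show 0 < 2 * m / δ + 1 by positivity)
    calc (∑ j, (d j : ℝ)) * (2 * m / δ + 1) ≤ ∑ j, d j * L (x j) := by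
          rw [Finset.sum_mul]
          gcongr with j
          exact hxH j
      _ ≤ ∑ _ : Fin m, 2 * T := Finset.sum_le_sum fun j _ ↦ hdT j
      _ = 2 * m * T := by simp; ring
      _ ≤ 2 * m * T + δ * T := le_add_of_nonneg_right (by positivity)
      _ = δ * T * (2 * m / δ + 1) := by field_simp

end ChoiceOfParameters

section TwoPlaceRothTheorem

variable {S : Subring (ℝ × ℝ)} {α κ C : ℝ}

lemma index_le_of_approximants (hS : ∀ z ∈ S, z.1 ≠ 0 → 1 ≤ |z.1| * |z.2|) (hκ : 0 < κ)
    (hC : 1 ≤ C) (happ : ∀ H, ∃ A : Approximant S α κ C, H ≤ A.height) {f : Polynomial ℤ}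
    (hf : 0 < f.natDegree) (hα : Polynomial.aeval α f = 0) {m : ℕ} {ε θ η : ℝ} (hε : 0 ≤ ε)
    (hε1 : ε < 1) (hexp : 2 * (f.natDegree : ℝ) ≤ Real.exp (m * ε ^ 2 / 2)) (hη : 0 < η)
    (hroth : RothLemma m θ η) :
    (2 + κ) * (m / 2 * (1 - ε) - θ) ≤ m := by
  set c₁ := Real.log (16 * f.supNorm)
  set c₂ := Real.log (8 * max 1 |α| * C)
  have hc₁ : 0 ≤ c₁ := Real.log_nonneg <| by
    linarith [one_le_supNorm hf]
  have hc₂ : 0 ≤ c₂ := Real.log_nonneg <| by nlinarith [le_max_left 1 |α|]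
  refine le_of_forall_pos_le_add fun δ' hδ' ↦ ?_
  set δ := min η δ' / (1 + c₁ + c₂)
  have hδ : δ * (1 + c₁ + c₂) = min η δ' := div_mul_cancel₀ _ (by positivity)
  have hδ0 : 0 < δ := by positivity
  obtain ⟨A, d, T, hT, hd, hdη, hTd, hsum, hN⟩ := exists_lacunary_degrees happ m hη hδ0
  set D : Fin m →₀ ℕ := Finsupp.equivFunOnFinite.symm d
  obtain ⟨P, hP, hPdeg, hPnorm, hPindex⟩ := exists_auxiliaryPolynomial (D := D) hf hα hd hε hε1
    (by rwa [Fintype.card_fin])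
  rw [Fintype.card_fin] at hPindex
  have hDdeg : (D.degree : ℝ) ≤ δ * T := by
    rw [Finsupp.degree_eq_sum]
    exact_mod_cast hN
  have hbound {c : ℝ} (hc : 0 ≤ c) : D.degree * c ≤ δ * c * T := by
    nlinarith
  have hδc : δ * c₁ + δ + δ * c₂ = min η δ' := by linarith
  obtain ⟨I, hI, hIne⟩ := hroth
    { degree_pos := hd
      degree_le_mul := hdη
      rootMultBound := fun j ↦ (A j).rootMultBound
      le_degree_mul := hTd
      sum_degree_le := hN.trans (by gcongr; nlinarith [min_le_left η δ'])
      ne_zero := hP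
      degreeOf_le := hPdeg
      log_l1Norm_le := (hPnorm.trans (hbound hc₁)).trans
        (by gcongr; nlinarith [min_le_left η δ']) }
  have hineq := Approximant.index_inequality hS hκ.le hC A hd hP hPdeg hT.le hTd hPindex hI hIne
  refine le_of_mul_le_mul_right ?_ hT
  calc (2 + κ) * (m / 2 * (1 - ε) - θ) * T = (2 + κ) * (T * (m / 2 * (1 - ε) - θ)) := by ring
    _ ≤ δ * c₂ * T + δ * c₁ * T + (m + δ) * T :=
      hineq.trans (add_le_add (add_le_add (hbound hc₂) (hPnorm.trans (hbound hc₁))) hsum)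
    _ = (m + min η δ') * T := by rw [← hδc]; ring
    _ ≤ (m + δ') * T := by
      gcongr
      exact min_le_right _ _

lemma lt_mul_index_sub {m θ : ℝ} (hκ : 0 < κ) (hm : 1 ≤ m) (hθ : θ ≤ κ / (8 * (2 + κ))) :
    m < (2 + κ) * (m / 2 * (1 - κ / (4 + 2 * κ)) - θ) := by
  have hε : (2 + κ) * (1 - κ / (4 + 2 * κ)) = 2 + κ / 2 := by
    field_simp
    ring
  have hθκ : (2 + κ) * θ ≤ κ / 8 :=
    calc (2 + κ) * θ ≤ (2 + κ) * (κ / (8 * (2 + κ))) := by gcongr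
      _ = κ / 8 := by field_simp
  have hexpand : (2 + κ) * (m / 2 * (1 - κ / (4 + 2 * κ)) - θ) =
      m + m * κ / 4 - (2 + κ) * θ := by
    linear_combination m / 2 * hε
  nlinarith

/-- The two places together play the role of one place of exponent `2 + κ` in Roth's theorem. -/
theorem transcendental_of_approximants (hS : ∀ z ∈ S, z.1 ≠ 0 → 1 ≤ |z.1| * |z.2|) (hκ : 0 < κ)
    (hC : 1 ≤ C) (happ : ∀ H, ∃ A : Approximant S α κ C, H ≤ A.height) :
    Transcendental ℚ α := by
  intro halg
  obtain ⟨f, hf0, hfα⟩ := (IsFractionRing.isAlgebraic_iff ℤ ℚ ℝ).2 halg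
  have hf : 0 < f.natDegree := Polynomial.natDegree_pos_of_aeval_root hf0 hfα (by simp)
  set ε := κ / (4 + 2 * κ) with hε
  have hε0 : 0 < ε := by positivity
  have hε1 : ε < 1 := by
    rw [hε, div_lt_one (by positivity)]
    linarith
  obtain ⟨m, hm⟩ : ∃ m : ℕ, 2 * (f.natDegree : ℝ) ≤ Real.exp (m * ε ^ 2 / 2) := by
    obtain ⟨m, hm⟩ := Archimedean.arch (2 * (f.natDegree : ℝ)) (show 0 < ε ^ 2 / 2 by positivity)
    rw [nsmul_eq_mul, ← mul_div_assoc] at hm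
    exact ⟨m, hm.trans ((le_add_of_nonneg_right zero_le_one).trans (Real.add_one_le_exp _))⟩
  have hm1 : (1 : ℝ) ≤ m := by
    have hf1 : (1 : ℝ) ≤ f.natDegree := by exact_mod_cast hf
    refine Nat.one_le_cast.2 (Nat.one_le_iff_ne_zero.2 fun h ↦ ?_)
    rw [h, Nat.cast_zero, zero_mul, zero_div, Real.exp_zero] at hm
    linarith
  set θ := min 1 (κ / (8 * (2 + κ)))
  obtain ⟨η, hη, hroth⟩ := exists_rothLemma m (ε := θ) (by positivity) (min_le_left _ _)
  exact (index_le_of_approximants hS hκ hC happ hf hfα hε0.le hε1 hm hη hroth).not_gt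
    (lt_mul_index_sub hκ hm1 (min_le_right _ _))

end TwoPlaceRothTheorem

end TwoPlaceRoth

namespace TwoPlaceRoth

section QuadraticPoints

open Polynomial

lemma RootMultBound.mono {ξ L L' : ℝ} (h : RootMultBound ξ L) (hL : L' ≤ L) :
    RootMultBound ξ L' := fun G hG ↦
  (mul_le_mul_of_nonneg_left hL (Nat.cast_nonneg _)).trans (h G hG)

section IrreduciblePolynomial

variable {K : Type*} [Field K] [CharZero K] {f G : ℤ[X]} {ξ : K}

lemma dvd_of_irreducible_of_aeval_eq_zero (hf : Irreducible f) (hdeg : f.natDegree ≠ 0)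
    (hξ : aeval ξ f = 0) (hG : aeval ξ G = 0) : f ∣ G := by
  have hprim := hf.isPrimitive hdeg
  have hfQ := (IsPrimitive.Int.irreducible_iff_irreducible_map_cast hprim).1 hf
  have aeval_map (P : ℤ[X]) : aeval ξ (P.map (Int.castRingHom ℚ)) = aeval ξ P :=
    aeval_map_algebraMap ℚ ξ P
  refine (IsPrimitive.Int.dvd_iff_map_cast_dvd_map_cast _ _ hprim).2 ?_
  have hdvd := minpoly.dvd ℚ ξ ((aeval_map G).trans hG)
  rw [← minpoly.eq_of_irreducible hfQ ((aeval_map f).trans hξ)] at hdvd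
  exact dvd_of_mul_right_dvd hdvd

lemma rootMultiplicity_eq_one_of_irreducible (hf : Irreducible f) (hdeg : f.natDegree ≠ 0)
    (hξ : aeval ξ f = 0) : (f.map (Int.castRingHom K)).rootMultiplicity ξ = 1 := by
  have hfQ := (IsPrimitive.Int.irreducible_iff_irreducible_map_cast (hf.isPrimitive hdeg)).1 hf
  have hsep : (f.map (Int.castRingHom K)).Separable := by
    have := hfQ.separable.map (f := algebraMap ℚ K)
    rwa [Polynomial.map_map, RingHom.ext_int (RingHom.comp _ _) (Int.castRingHom K)] at this
  refine le_antisymm (rootMultiplicity_le_one_of_separable hsep ξ) ?_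
  refine (rootMultiplicity_pos hsep.ne_zero).2 ?_
  rw [IsRoot, eval_map]
  exact hξ

end IrreduciblePolynomial

lemma rootMultBound_of_irreducible {f : ℤ[X]} {ξ : ℝ} (hf : Irreducible f)
    (hdeg : f.natDegree ≠ 0) (hξ : aeval ξ f = 0) :
    RootMultBound ξ (Real.log |(f.leadingCoeff : ℝ)|) := by
  intro G hG
  obtain ⟨H, hGH, hH⟩ :=
    (FiniteMultiplicity.of_not_isUnit hf.not_isUnit hG).exists_eq_pow_mul_and_not_dvd
  set k := multiplicity f G
  have hH0 : H ≠ 0 := by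
    rintro rfl
    exact hH (dvd_zero f)
  have hHξ : ¬ (H.map (Int.castRingHom ℝ)).IsRoot ξ := fun h ↦ by
    rw [IsRoot, eval_map] at h
    exact hH (dvd_of_irreducible_of_aeval_eq_zero hf hdeg hξ h)
  have hinj : Function.Injective (Int.castRingHom ℝ) := Int.cast_injective
  have hmult : (G.map (Int.castRingHom ℝ)).rootMultiplicity ξ = k := by
    have hprod : (f.map (Int.castRingHom ℝ)) ^ k * H.map (Int.castRingHom ℝ) ≠ 0 :=
      mul_ne_zero (pow_ne_zero _ ((Polynomial.map_ne_zero_iff hinj).2 hf.ne_zero))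
        ((Polynomial.map_ne_zero_iff hinj).2 hH0)
    rw [hGH, Polynomial.map_mul, Polynomial.map_pow, rootMultiplicity_mul hprod, ← count_roots,
      roots_pow, Multiset.count_nsmul, count_roots,
      rootMultiplicity_eq_one_of_irreducible hf hdeg hξ, rootMultiplicity_eq_zero hHξ, mul_one,
      add_zero]
  have hlead : |(f.leadingCoeff : ℝ)| ^ k ≤ |(G.leadingCoeff : ℝ)| := by
    rw [hGH, leadingCoeff_mul, leadingCoeff_pow]
    push_cast
    rw [abs_mul, abs_pow]
    refine le_mul_of_one_le_right (by positivity) ?_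
    exact_mod_cast Int.one_le_abs (leadingCoeff_ne_zero.2 hH0)
  rw [hmult, ← Real.log_pow]
  have hf0 : (f.leadingCoeff : ℝ) ≠ 0 := Int.cast_ne_zero.2 (leadingCoeff_ne_zero.2 hf.ne_zero)
  exact Real.log_le_log (by positivity) hlead

lemma isPrimitive_quadratic {R : Type*} [CommRing R] {A B D x y z : R}
    (h : x * A + y * B + z * D = 1) : (C A * X ^ 2 + C B * X + C D).IsPrimitive := by
  intro r hr
  rw [C_dvd_iff_dvd_coeff] at hr
  have hA : r ∣ A := by simpa [coeff_X, coeff_C] using hr 2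
  have hB : r ∣ B := by simpa [coeff_X, coeff_C] using hr 1
  have hD : r ∣ D := by simpa using hr 0
  exact isUnit_of_dvd_one (h ▸ dvd_add (dvd_add (hA.mul_left x) (hB.mul_left y)) (hD.mul_left z))

lemma irreducible_quadratic {A B D : ℤ} (hA : A ≠ 0)
    (hprim : (C A * X ^ 2 + C B * X + C D).IsPrimitive) {ξ ξ' : ℝ} (hξ : Irrational ξ)
    (hξ' : Irrational ξ') (hB : (B : ℝ) = -A * (ξ + ξ')) (hD : (D : ℝ) = A * (ξ * ξ')) :
    Irreducible (C A * X ^ 2 + C B * X + C D) := by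
  rw [IsPrimitive.Int.irreducible_iff_irreducible_map_cast hprim]
  have hAQ : (A : ℚ) ≠ 0 := Int.cast_ne_zero.2 hA
  have hmap : (C A * X ^ 2 + C B * X + C D).map (Int.castRingHom ℚ) =
      C (A : ℚ) * X ^ 2 + C (B : ℚ) * X + C (D : ℚ) := by
    simp
  have hdeg := natDegree_quadratic (b := (B : ℚ)) (c := (D : ℚ)) hAQ
  rw [hmap, irreducible_iff_roots_eq_zero_of_degree_le_three (by rw [hdeg]) (by rw [hdeg]; simp)]
  refine Multiset.eq_zero_of_forall_notMem fun r hr ↦ ?_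
  have hroot : (A : ℝ) * ((r - ξ) * (r - ξ')) = 0 := by
    have hr0 : (A : ℚ) * r ^ 2 + B * r + D = 0 := by simpa using isRoot_of_mem_roots hr
    have hr0' : (A : ℝ) * r ^ 2 + B * r + D = 0 := by exact_mod_cast hr0
    linear_combination hr0' - r * hB - hD
  rcases mul_eq_zero.1 ((mul_eq_zero.1 hroot).resolve_left (Int.cast_ne_zero.2 hA)) with h | h
  · exact hξ ⟨r, sub_eq_zero.1 h⟩
  · exact hξ' ⟨r, sub_eq_zero.1 h⟩

lemma rootMultBound_quadratic {A B D : ℤ} (hA : A ≠ 0)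
    (hprim : (C A * X ^ 2 + C B * X + C D).IsPrimitive) {ξ ξ' : ℝ} (hξ : Irrational ξ)
    (hξ' : Irrational ξ') (hB : (B : ℝ) = -A * (ξ + ξ')) (hD : (D : ℝ) = A * (ξ * ξ')) :
    RootMultBound ξ (Real.log |(A : ℝ)|) := by
  rw [← leadingCoeff_quadratic (b := B) (c := D) hA]
  refine rootMultBound_of_irreducible (irreducible_quadratic hA hprim hξ hξ' hB hD) ?_ ?_
  · rw [natDegree_quadratic hA]
    exact two_ne_zero
  · have hroot : (A : ℝ) * ξ ^ 2 + B * ξ + D = 0 := by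
      rw [hB, hD]
      ring
    simpa using hroot

lemma eq_zero_of_intCast_mul_add_intCast {x : ℝ} (hx : Irrational x) {m n : ℤ}
    (h : m * x + n = 0) : m = 0 ∧ n = 0 := by
  by_cases hm : m = 0
  · subst hm
    exact ⟨rfl, by simpa using h⟩
  · exact absurd h ((hx.intCast_mul hm).add_intCast n).ne_zero

lemma irrational_moebius {x : ℝ} (hx : Irrational x) {p p' q q' : ℤ}
    (hdet : p * q' - p' * q ≠ 0) : Irrational ((p * x + p') / (q * x + q')) := by
  rintro ⟨r, hr⟩
  have hden : (q : ℝ) * x + q' ≠ 0 := fun h ↦ by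
    obtain ⟨rfl, rfl⟩ := eq_zero_of_intCast_mul_add_intCast hx h
    simp at hdet
  rw [eq_div_iff hden, Rat.cast_def, div_mul_eq_mul_div,
    div_eq_iff (Nat.cast_ne_zero.2 r.den_nz)] at hr
  obtain ⟨hp, hp'⟩ := eq_zero_of_intCast_mul_add_intCast hx (m := r.num * q - p * r.den)
    (n := r.num * q' - p' * r.den) (by push_cast; linear_combination hr)
  refine hdet (mul_right_cancel₀ (Int.natCast_ne_zero.2 r.den_nz) ?_)
  linear_combination q * hp' - q' * hp

section QuadraticConjugates

variable {T N : ℤ} {ω ω' : ℝ}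

lemma mul_quadraticConj (hT : ω + ω' = T) (hN : ω * ω' = N) (u v : ℤ) :
    (u * ω + v) * (u * ω' + v) = ((N * u ^ 2 + T * u * v + v ^ 2 : ℤ) : ℝ) := by
  push_cast
  linear_combination (u * v : ℝ) * hT + (u : ℝ) ^ 2 * hN

lemma exists_of_mem_closure (hT : ω + ω' = T) (hN : ω * ω' = N) {z : ℝ × ℝ}
    (hz : z ∈ Subring.closure {(ω, ω')}) : ∃ u v : ℤ, z = (u * ω + v, u * ω' + v) := by
  induction hz using Subring.closure_induction with
  | mem z hz => exact ⟨1, 0, by simpa using hz⟩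
  | zero => exact ⟨0, 0, by simp; rfl⟩
  | one => exact ⟨0, 1, by simp; rfl⟩
  | add _ _ _ _ hx hy =>
    obtain ⟨⟨u, v, rfl⟩, ⟨u', v', rfl⟩⟩ := And.intro hx hy
    refine ⟨u + u', v + v', ?_⟩
    ext <;> push_cast <;> simp only [Prod.mk_add_mk] <;> ring
  | neg _ _ hx =>
    obtain ⟨u, v, rfl⟩ := hx
    refine ⟨-u, -v, ?_⟩
    ext <;> push_cast <;> simp only [Prod.neg_mk] <;> ring
  | mul _ _ _ _ hx hy =>
    obtain ⟨⟨u, v, rfl⟩, ⟨u', v', rfl⟩⟩ := And.intro hx hy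
    refine ⟨u * v' + v * u' + T * u * u', v * v' - N * u * u', ?_⟩
    ext <;> push_cast <;> simp only [Prod.mk_mul_mk]
    · linear_combination (u * u' : ℝ) * (ω * hT - hN)
    · linear_combination (u * u' : ℝ) * (ω' * hT - hN)

lemma intCast_mul_add_mem_closure (u v : ℤ) :
    ((u * ω + v, u * ω' + v) : ℝ × ℝ) ∈ Subring.closure {(ω, ω')} := by
  have hω : (ω, ω') ∈ Subring.closure {(ω, ω')} := Subring.subset_closure rfl
  exact add_mem (mul_mem (intCast_mem _ u) hω) (intCast_mem _ v)

lemma irrational_quadraticConj (hω : Irrational ω) (hT : ω + ω' = T) : Irrational ω' := by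
  rw [eq_sub_of_add_eq' hT]
  exact hω.intCast_sub T

lemma one_le_abs_mul_abs_of_mem_closure (hω : Irrational ω) (hT : ω + ω' = T) (hN : ω * ω' = N)
    {z : ℝ × ℝ} (hz : z ∈ Subring.closure {(ω, ω')}) (hz0 : z.1 ≠ 0) : 1 ≤ |z.1| * |z.2| := by
  obtain ⟨u, v, rfl⟩ := exists_of_mem_closure hT hN hz
  have hnorm : (u * ω + v) * (u * ω' + v) ≠ 0 := by
    refine mul_ne_zero hz0 fun h ↦ hz0 ?_
    obtain ⟨rfl, rfl⟩ :=
      eq_zero_of_intCast_mul_add_intCast (irrational_quadraticConj hω hT) h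
    simp
  rw [← abs_mul]
  rw [mul_quadraticConj hT hN] at hnorm ⊢
  exact_mod_cast Int.one_le_abs (Int.cast_ne_zero.1 hnorm)

/- The minimal polynomial of the Möbius image has leading coefficient the norm of `q * ω + q'`, and
its binary form takes the value `1` at `(p, q)`, so that it is primitive. -/
lemma rootMultBound_moebius (hω : Irrational ω) (hT : ω + ω' = T) (hN : ω * ω' = N)
    {p p' q q' : ℤ} (hdet : (p * q' - p' * q) ^ 2 = 1) :
    RootMultBound ((p * ω + p') / (q * ω + q'))
      (Real.log |(q * ω + q') * (q * ω' + q')|) := by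
  have hω' := irrational_quadraticConj hω hT
  have hdet0 : p * q' - p' * q ≠ 0 := fun h ↦ by simp [h] at hdet
  have hden {x : ℝ} (hx : Irrational x) : (q : ℝ) * x + q' ≠ 0 := fun h ↦ by
    obtain ⟨rfl, rfl⟩ := eq_zero_of_intCast_mul_add_intCast hx h
    simp at hdet
  set A : ℤ := N * q ^ 2 + T * q * q' + q' ^ 2
  set B : ℤ := -(2 * N * p * q + T * (q * p' + q' * p) + 2 * p' * q')
  set D : ℤ := N * p ^ 2 + T * p * p' + p' ^ 2
  set ξ := (p * ω + p') / (q * ω + q')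
  set ξ' := (p * ω' + p') / (q * ω' + q')
  have hnormA : (q * ω + q') * (q * ω' + q') = A := mul_quadraticConj hT hN q q'
  have hA : A ≠ 0 := Int.cast_ne_zero.1 (hnormA ▸ mul_ne_zero (hden hω) (hden hω'))
  have hprim : (C A * X ^ 2 + C B * X + C D).IsPrimitive :=
    isPrimitive_quadratic (x := p ^ 2) (y := p * q) (z := q ^ 2) (by linear_combination hdet)
  have hξ : ξ * (q * ω + q') = p * ω + p' := div_mul_cancel₀ _ (hden hω)
  have hξ' : ξ' * (q * ω' + q') = p * ω' + p' := div_mul_cancel₀ _ (hden hω')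
  have hB : (B : ℝ) = -A * (ξ + ξ') := by
    rw [← hnormA]
    push_cast [B]
    linear_combination (q * ω' + q') * hξ + (q * ω + q') * hξ' +
      (q * p' + q' * p) * hT + 2 * p * q * hN
  have hD : (D : ℝ) = A * (ξ * ξ') := by
    rw [← hnormA, ← mul_quadraticConj hT hN]
    linear_combination -(ξ' * (q * ω' + q')) * hξ - (p * ω + p') * hξ'
  rw [hnormA]
  exact rootMultBound_quadratic hA hprim (irrational_moebius hω hdet0)
    (irrational_moebius hω' hdet0) hB hD

end QuadraticConjugates

end QuadraticPoints

section Convergents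

variable {t : ℕ → ℕ}

lemma cfDen_pos (ht : ∀ i, 1 ≤ i → 0 < t i) (n : ℕ) : 0 < cfDen t n := by
  induction n using Nat.twoStepInduction with
  | zero => exact one_pos
  | one => exact ht 1 le_rfl
  | more n ih _ => exact Nat.add_pos_right _ ih

lemma monotone_cfDen (ht : ∀ i, 1 ≤ i → 0 < t i) : Monotone (cfDen t) := by
  refine monotone_nat_of_le_succ fun n ↦ ?_
  cases n with
  | zero => exact ht 1 le_rfl
  | succ n => exact Nat.le_add_right_of_le (Nat.le_mul_of_pos_left _ (ht _ (by omega)))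

lemma le_cfDen (ht : ∀ i, 1 ≤ i → 0 < t i) (n : ℕ) : n ≤ cfDen t n := by
  induction n using Nat.twoStepInduction with
  | zero => exact Nat.zero_le _
  | one => exact ht 1 le_rfl
  | more n _ ih =>
    change n + 1 + 1 ≤ t (n + 2) * cfDen t (n + 1) + cfDen t n
    exact add_le_add (ih.trans (Nat.le_mul_of_pos_left _ (ht _ (by omega)))) (cfDen_pos ht n)

lemma cfDen_le_pow (ht : ∀ i, 1 ≤ i → 0 < t i) {M : ℕ} (hM : ∀ i, 1 ≤ i → t i ≤ M) (n : ℕ) :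
    cfDen t n ≤ (M + 1) ^ n := by
  induction n using Nat.twoStepInduction with
  | zero => exact le_rfl
  | one => simpa [cfDen] using (hM 1 le_rfl).trans M.le_succ
  | more n _ ih =>
    calc t (n + 2) * cfDen t (n + 1) + cfDen t n
        ≤ M * cfDen t (n + 1) + cfDen t (n + 1) := by
          gcongr
          · exact hM _ (by omega)
          · exact monotone_cfDen ht n.le_succ
      _ = (M + 1) * cfDen t (n + 1) := by ring
      _ ≤ (M + 1) * (M + 1) ^ (n + 1) := by gcongr
      _ = (M + 1) ^ (n + 2) := by ring

lemma cfNum_mul_cfDen_sub (t : ℕ → ℕ) (n : ℕ) :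
    (cfNum t (n + 1) * cfDen t n - cfNum t n * cfDen t (n + 1) : ℤ) = (-1) ^ n := by
  induction n with
  | zero => simp [cfNum, cfDen]
  | succ n ih =>
    rw [cfDen, cfNum, pow_succ, ← ih]
    push_cast
    ring

lemma abs_cfNum_mul_cfDen_sub_le (t : ℕ → ℕ) (n k : ℕ) :
    |(cfNum t (n + k) * cfDen t n - cfNum t n * cfDen t (n + k) : ℤ)| * cfDen t (n + 1) ≤
      cfDen t (n + k) := by
  induction k using Nat.twoStepInduction with
  | zero => simp [mul_comm]
  | one => rw [cfNum_mul_cfDen_sub, abs_pow, abs_neg, abs_one, one_pow, one_mul]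
  | more k ih₀ ih₁ =>
    set D : ℕ → ℤ := fun k ↦ cfNum t (n + k) * cfDen t n - cfNum t n * cfDen t (n + k)
    have hrec : D (k + 2) = t (n + k + 2) * D (k + 1) + D k := by
      simp only [D, ← add_assoc]
      rw [cfNum, cfDen]
      push_cast
      ring
    calc |D (k + 2)| * cfDen t (n + 1)
        ≤ (t (n + k + 2) * |D (k + 1)| + |D k|) * cfDen t (n + 1) := by
          rw [hrec]
          gcongr
          refine (abs_add_le _ _).trans_eq ?_
          rw [abs_mul, Nat.abs_cast]
      _ = t (n + k + 2) * (|D (k + 1)| * cfDen t (n + 1)) + |D k| * cfDen t (n + 1) := by ring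
      _ ≤ t (n + k + 2) * cfDen t (n + (k + 1)) + cfDen t (n + k) := by gcongr
      _ = cfDen t (n + (k + 2)) := by
        rw [← add_assoc, ← add_assoc, cfDen]
        push_cast
        rfl

lemma abs_mul_cfDen_sub_cfNum_le (ht : ∀ i, 1 ≤ i → 0 < t i) {α : ℝ}
    (hα : Tendsto (fun n => (cfNum t n : ℝ) / cfDen t n) atTop (𝓝 α)) (n : ℕ) :
    |α * cfDen t n - cfNum t n| ≤ 1 / cfDen t (n + 1) := by
  have hpos (n : ℕ) : (0 : ℝ) < cfDen t n := Nat.cast_pos.2 (cfDen_pos ht n)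
  have hlim : Tendsto (fun m ↦ |(cfNum t m : ℝ) / cfDen t m * cfDen t n - cfNum t n|) atTop
      (𝓝 |α * cfDen t n - cfNum t n|) := ((hα.mul_const _).sub_const _).abs
  refine le_of_tendsto hlim ((eventually_ge_atTop n).mono fun m hm ↦ ?_)
  obtain ⟨k, rfl⟩ := Nat.exists_eq_add_of_le hm
  have hcross : (cfNum t (n + k) : ℝ) / cfDen t (n + k) * cfDen t n - cfNum t n =
      (cfNum t (n + k) * cfDen t n - cfNum t n * cfDen t (n + k)) / cfDen t (n + k) := by
    have := (hpos (n + k)).ne'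
    field_simp
  rw [hcross, abs_div, abs_of_pos (hpos (n + k)), div_le_div_iff₀ (hpos _) (hpos _), one_mul]
  exact_mod_cast abs_cfNum_mul_cfDen_sub_le t n k

/- `(ω, 1)` is an eigenvector, with eigenvalue `ω`, of the recurrence with constant coefficient
`a`. -/
lemma mul_error_add_error_eq_pow_mul {a s l : ℕ} {ω : ℝ} (α : ℝ) (hω : ω ^ 2 = a * ω + 1)
    (hblock : ∀ i, s + 1 < i → i ≤ s + 1 + l → t i = a) :
    ω * (α * cfDen t (s + l + 1) - cfNum t (s + l + 1)) + (α * cfDen t (s + l) - cfNum t (s + l)) =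
      ω ^ l * (ω * (α * cfDen t (s + 1) - cfNum t (s + 1)) + (α * cfDen t s - cfNum t s)) := by
  induction l with
  | zero => simp
  | succ l ih =>
    have hstep := ih fun i hi hi' ↦ hblock i hi (by omega)
    have ht : t (s + l + 2) = a := hblock _ (by omega) (by omega)
    rw [pow_succ', mul_assoc, ← hstep, ← add_assoc, cfDen, cfNum, ht]
    push_cast
    linear_combination -(α * cfDen t (s + l + 1) - cfNum t (s + l + 1)) * hω

end Convergents

section ConstantBlocks

lemma exists_quadratic_unit {a : ℕ} (ha : 0 < a) :
    ∃ ω ω' : ℝ, ω + ω' = a ∧ ω * ω' = -1 ∧ 1 < ω ∧ Irrational ω := by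
  have hsquare : ¬ IsSquare (a ^ 2 + 4) := by
    rintro ⟨r, hr⟩
    have hlt : a < r := by nlinarith
    have hgt : r < a + 2 := by nlinarith
    obtain rfl : r = a + 1 := by omega
    ring_nf at hr
    omega
  have hsqrt := irrational_sqrt_natCast_iff.2 hsquare
  set δ := √((a ^ 2 + 4 : ℕ) : ℝ)
  have hδ : δ ^ 2 = a ^ 2 + 4 := by
    rw [Real.sq_sqrt (Nat.cast_nonneg _)]
    push_cast
    rfl
  have ha1 : (1 : ℝ) ≤ a := Nat.one_le_cast.2 ha
  have hδ1 : 1 < δ := by nlinarith [Real.sqrt_nonneg ((a ^ 2 + 4 : ℕ) : ℝ)]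
  refine ⟨(a + δ) / 2, (a - δ) / 2, by ring, by linear_combination -hδ / 4, by linarith, ?_⟩
  exact_mod_cast (hsqrt.natCast_add a).div_natCast two_ne_zero

variable {a : ℕ} {t : ℕ → ℕ} {ω ω' α : ℝ}

lemma conj_mem_Ioo (hN : ω * ω' = -1) (hω : 1 < ω) : ω' ∈ Set.Ioo (-1) 0 :=
  ⟨by nlinarith, by nlinarith⟩

lemma mul_cfDen_le_mul_abs_den_conj (hT : ω + ω' = a) (hN : ω * ω' = -1) (hω : 1 < ω)
    (ht : ∀ i, 1 ≤ i → 0 < t i) {n : ℕ} (hn : t (n + 2) ≠ a) :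
    min (-ω') (1 + ω') * cfDen t (n + 1) ≤
      ω * |cfDen t (n + 2) * ω' + cfDen t (n + 1)| := by
  set q := (cfDen t (n + 1) : ℝ)
  have hq : 0 ≤ q := Nat.cast_nonneg _
  have hq₀ : (cfDen t n : ℝ) ∈ Set.Icc 0 q :=
    ⟨Nat.cast_nonneg _, Nat.cast_le.2 (monotone_cfDen ht n.le_succ)⟩
  have hmul : ω * (cfDen t (n + 2) * ω' + q) = (a - t (n + 2)) * q + -ω' * q - cfDen t n := by
    rw [cfDen]
    push_cast
    linear_combination (t (n + 2) * q + cfDen t n) * hN + q * hT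
  rw [← abs_of_pos (one_pos.trans hω), ← abs_mul, hmul]
  rcases hn.lt_or_gt with hlt | hlt
  · have hle : 1 * q ≤ (a - t (n + 2)) * q := by
      gcongr
      rw [le_sub_iff_add_le']
      exact_mod_cast hlt
    refine le_trans ?_ (le_abs_self _)
    linarith [hq₀.2, mul_le_mul_of_nonneg_right (min_le_left (-ω') (1 + ω')) hq]
  · have hle : (a - t (n + 2)) * q ≤ -1 * q := by
      gcongr
      rw [sub_le_iff_le_add', ← sub_eq_add_neg, le_sub_iff_add_le]
      exact_mod_cast hlt
    refine le_trans ?_ (neg_le_abs _)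
    linarith [hq₀.1, mul_le_mul_of_nonneg_right (min_le_right (-ω') (1 + ω')) hq]

lemma cfDen_le_abs_norm (hT : ω + ω' = a) (hN : ω * ω' = -1) (hω : 1 < ω)
    (ht : ∀ i, 1 ≤ i → 0 < t i) {n : ℕ} (hn : t (n + 2) ≠ a)
    (hlarge : t (n + 2) + 1 ≤ min (-ω') (1 + ω') * cfDen t (n + 2)) :
    (cfDen t (n + 2) : ℝ) ≤
      |(cfDen t (n + 2) * ω + cfDen t (n + 1)) * (cfDen t (n + 2) * ω' + cfDen t (n + 1))| := by
  have hstep : (cfDen t (n + 2) : ℝ) ≤ (t (n + 2) + 1) * cfDen t (n + 1) := by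
    rw [cfDen]
    push_cast
    rw [add_one_mul]
    gcongr
    exact monotone_cfDen ht n.le_succ
  set q := (cfDen t (n + 2) : ℝ)
  set q' := (cfDen t (n + 1) : ℝ)
  have hnonneg : 0 ≤ q * ω + q' := by positivity
  rw [abs_mul, abs_of_nonneg hnonneg]
  calc q ≤ (t (n + 2) + 1) * q' := hstep
    _ ≤ min (-ω') (1 + ω') * q * q' := by gcongr
    _ = q * (min (-ω') (1 + ω') * q') := by ring
    _ ≤ q * (ω * |q * ω' + q'|) :=
      mul_le_mul_of_nonneg_left (mul_cfDen_le_mul_abs_den_conj hT hN hω ht hn) (Nat.cast_nonneg _)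
    _ = q * ω * |q * ω' + q'| := by ring
    _ ≤ (q * ω + q') * |q * ω' + q'| := by
      gcongr
      exact le_add_of_nonneg_right (Nat.cast_nonneg _)

lemma abs_mul_cfDen_sub_cfNum_le_of_le (ht : ∀ i, 1 ≤ i → 0 < t i)
    (hα : Tendsto (fun n => (cfNum t n : ℝ) / cfDen t n) atTop (𝓝 α)) {m n : ℕ}
    (hmn : m ≤ n + 1) : |α * cfDen t n - cfNum t n| ≤ 1 / cfDen t m := by
  refine (abs_mul_cfDen_sub_cfNum_le ht hα n).trans (one_div_le_one_div_of_le ?_ ?_)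
  · exact Nat.cast_pos.2 (cfDen_pos ht m)
  · exact Nat.cast_le.2 (monotone_cfDen ht hmn)

lemma abs_num_sub_le_of_const_block (hω : ω ^ 2 = a * ω + 1) (hω0 : 0 < ω)
    (ht : ∀ i, 1 ≤ i → 0 < t i)
    (hα : Tendsto (fun n => (cfNum t n : ℝ) / cfDen t n) atTop (𝓝 α)) {n l : ℕ}
    (hblock : ∀ i, n + 1 < i → i ≤ n + 1 + l → t i = a) :
    |(cfNum t (n + 1) * ω + cfNum t n) - α * (cfDen t (n + 1) * ω + cfDen t n)| ≤
      (1 + ω) / (cfDen t (n + 1) * ω ^ l) := by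
  have hq : (0 : ℝ) < cfDen t (n + 1) := Nat.cast_pos.2 (cfDen_pos ht _)
  have hend := mul_error_add_error_eq_pow_mul α hω hblock
  rw [le_div_iff₀ (by positivity)]
  calc |(cfNum t (n + 1) * ω + cfNum t n) - α * (cfDen t (n + 1) * ω + cfDen t n)| *
        (cfDen t (n + 1) * ω ^ l)
      = |ω ^ l * (ω * (α * cfDen t (n + 1) - cfNum t (n + 1)) + (α * cfDen t n - cfNum t n))| *
          cfDen t (n + 1) := by
        rw [abs_mul, abs_of_pos (pow_pos hω0 l), abs_sub_comm]
        ring_nf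
    _ ≤ (ω * (1 / cfDen t (n + 1)) + 1 / cfDen t (n + 1)) * cfDen t (n + 1) := by
        rw [← hend]
        gcongr
        refine (abs_add_le _ _).trans ?_
        rw [abs_mul, abs_of_pos hω0]
        gcongr <;> exact abs_mul_cfDen_sub_cfNum_le_of_le ht hα (by omega)
    _ = 1 + ω := by
        field_simp
        ring

lemma abs_num_conj_sub_le (hω' : |ω'| ≤ 1) (ht : ∀ i, 1 ≤ i → 0 < t i)
    (hα : Tendsto (fun n => (cfNum t n : ℝ) / cfDen t n) atTop (𝓝 α)) (n : ℕ) :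
    |(cfNum t (n + 1) * ω' + cfNum t n) - α * (cfDen t (n + 1) * ω' + cfDen t n)| ≤
      2 * (1 / cfDen t (n + 1)) := by
  calc |(cfNum t (n + 1) * ω' + cfNum t n) - α * (cfDen t (n + 1) * ω' + cfDen t n)|
      = |ω' * (α * cfDen t (n + 1) - cfNum t (n + 1)) + (α * cfDen t n - cfNum t n)| := by
        rw [abs_sub_comm]
        ring_nf
    _ ≤ 1 * (1 / cfDen t (n + 1)) + 1 / cfDen t (n + 1) := by
        refine (abs_add_le _ _).trans ?_
        rw [abs_mul]
        gcongr <;> exact abs_mul_cfDen_sub_cfNum_le_of_le ht hα (by omega)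
    _ = 2 * (1 / cfDen t (n + 1)) := by ring

lemma inv_mul_pow_le_exp {q κ : ℝ} {l : ℕ} (hq : 0 < q) (hω : 0 < ω)
    (hκ : 2 * κ * Real.log q ≤ l * Real.log ω) :
    (q * ω ^ l)⁻¹ ≤ Real.exp (-(1 + 2 * κ) * Real.log q) := by
  rw [neg_mul, Real.exp_neg, add_mul, one_mul, Real.exp_add, Real.exp_log hq]
  gcongr
  rw [← Real.exp_log (pow_pos hω l), Real.log_pow]
  exact Real.exp_le_exp.2 hκ

lemma rootMultBound_convergents (hT : ω + ω' = a) (hN : ω * ω' = -1) (hω : Irrational ω) (n : ℕ) :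
    RootMultBound ((cfNum t (n + 1) * ω + cfNum t n) / (cfDen t (n + 1) * ω + cfDen t n))
      (Real.log |(cfDen t (n + 1) * ω + cfDen t n) * (cfDen t (n + 1) * ω' + cfDen t n)|) := by
  refine mod_cast rootMultBound_moebius hω (T := a) (N := -1) (mod_cast hT) (mod_cast hN)
    (p := cfNum t (n + 1)) (p' := cfNum t n) (q := cfDen t (n + 1)) (q' := cfDen t n) ?_
  rw [cfNum_mul_cfDen_sub, ← pow_mul, mul_comm, pow_mul, neg_one_sq, one_pow]

lemma exists_approximant_of_const_block (hT : ω + ω' = a) (hN : ω * ω' = -1) (hω : 1 < ω)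
    (hirr : Irrational ω) (ht : ∀ i, 1 ≤ i → 0 < t i)
    (hα : Tendsto (fun n => (cfNum t n : ℝ) / cfDen t n) atTop (𝓝 α)) {n l : ℕ} {κ : ℝ}
    (hn : t (n + 2) ≠ a) (hblock : ∀ i, n + 2 < i → i ≤ n + 2 + l → t i = a)
    (hκ : 2 * κ * Real.log (cfDen t (n + 2)) ≤ l * Real.log ω)
    (hlarge : t (n + 2) + 1 ≤ min (-ω') (1 + ω') * cfDen t (n + 2)) :
    ∃ A : Approximant (Subring.closure {(ω, ω')}) α κ (1 + ω),
      A.height = Real.log (cfDen t (n + 2)) := by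
  obtain ⟨hω'1, hω'0⟩ := conj_mem_Ioo hN hω
  have hω0 := one_pos.trans hω
  have habs : |ω'| ≤ 1 := abs_le.2 ⟨hω'1.le, by linarith⟩
  have hmem (u v : ℕ) : ((u * ω + v, u * ω' + v) : ℝ × ℝ) ∈ Subring.closure {(ω, ω')} := by
    exact_mod_cast intCast_mul_add_mem_closure (ω := ω) (ω' := ω') u v
  have hq : (0 : ℝ) < cfDen t (n + 2) := Nat.cast_pos.2 (cfDen_pos ht _)
  have hq' : (cfDen t (n + 1) : ℝ) ≤ cfDen t (n + 2) :=
    Nat.cast_le.2 (monotone_cfDen ht (n + 1).le_succ)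
  have hexp : Real.exp (Real.log (cfDen t (n + 2))) = cfDen t (n + 2) := Real.exp_log hq
  refine ⟨{
    num := (cfNum t (n + 2) * ω + cfNum t (n + 1), cfNum t (n + 2) * ω' + cfNum t (n + 1))
    den := (cfDen t (n + 2) * ω + cfDen t (n + 1), cfDen t (n + 2) * ω' + cfDen t (n + 1))
    height := Real.log (cfDen t (n + 2))
    num_mem := hmem _ _
    den_mem := hmem _ _
    den_fst_ne_zero := by positivity
    abs_den_fst_le := ?_
    abs_den_snd_le := ?_
    abs_sub_fst_le := ?_
    abs_sub_snd_le := ?_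
    rootMultBound := ?_ }, rfl⟩
  · rw [hexp, abs_of_nonneg (by positivity)]
    linarith
  · rw [hexp]
    refine (abs_add_le _ _).trans ?_
    rw [abs_mul, Nat.abs_cast, Nat.abs_cast]
    nlinarith
  · refine (abs_num_sub_le_of_const_block (by linear_combination ω * hT - hN) hω0 ht hα
      hblock).trans ?_
    rw [div_eq_mul_inv]
    gcongr
    exact inv_mul_pow_le_exp hq hω0 hκ
  · refine (abs_num_conj_sub_le habs ht hα (n + 1)).trans ?_
    rw [neg_one_mul, Real.exp_neg, hexp, one_div]
    gcongr
    linarith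
  · exact (rootMultBound_convergents hT hN hirr (n + 1)).mono
      (Real.log_le_log hq (cfDen_le_abs_norm hT hN hω ht hn hlarge))

lemma log_cfDen_le (ht : ∀ i, 1 ≤ i → 0 < t i) {M : ℕ} (hM : ∀ i, 1 ≤ i → t i ≤ M) (n : ℕ) :
    Real.log (cfDen t n) ≤ n * Real.log (M + 1 : ℕ) := by
  rw [← Real.log_pow]
  exact Real.log_le_log (Nat.cast_pos.2 (cfDen_pos ht n)) (mod_cast cfDen_le_pow ht hM n)

lemma log_cfDen_le_mul_of_le (ht : ∀ i, 1 ≤ i → 0 < t i) {M : ℕ} (hM : ∀ i, 1 ≤ i → t i ≤ M)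
    {K : ℝ} {n l : ℕ} (hn : (n : ℝ) ≤ K * l) :
    Real.log (cfDen t n) ≤ max K 1 * l * Real.log (M + 1 : ℕ) := by
  refine (log_cfDen_le ht hM n).trans ?_
  gcongr
  exact hn.trans (by gcongr; exact le_max_left _ _)

theorem transcendental_of_frequently_const_block (ha : 0 < a) (ht : ∀ i, 1 ≤ i → 0 < t i) {M : ℕ}
    (hM : ∀ i, 1 ≤ i → t i ≤ M)
    (hα : Tendsto (fun n => (cfNum t n : ℝ) / cfDen t n) atTop (𝓝 α)) {K : ℝ}
    (hblock : ∃ᶠ s in atTop, ∃ l : ℕ, t s ≠ a ∧ (s : ℝ) ≤ K * l ∧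
      ∀ i, s < i → i ≤ s + l → t i = a) :
    Transcendental ℚ α := by
  obtain ⟨ω, ω', hT, hN, hω, hirr⟩ := exists_quadratic_unit ha
  obtain ⟨hω'1, hω'0⟩ := conj_mem_Ioo hN hω
  have hM0 : 0 < M := (ht 1 le_rfl).trans_le (hM 1 le_rfl)
  have hlogM : 0 < Real.log (M + 1 : ℕ) := Real.log_pos (Nat.one_lt_cast.2 (by omega))
  have hlogω : 0 < Real.log ω := Real.log_pos hω
  set c := min (-ω') (1 + ω')
  have hc : 0 < c := lt_min (by linarith) (by linarith)
  set κ := Real.log ω / (2 * max K 1 * Real.log (M + 1 : ℕ)) with hκ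
  refine transcendental_of_approximants (κ := κ) (C := 1 + ω)
    (fun z hz ↦ one_le_abs_mul_abs_of_mem_closure hirr (T := a) (N := -1) (mod_cast hT)
      (mod_cast hN) hz) (by positivity) (by linarith) fun H ↦ ?_
  obtain ⟨s₀, hs₀⟩ := exists_nat_ge (max (Real.exp H) ((M + 1) / c))
  obtain ⟨s, ⟨l, hs, hKl, hl⟩, hs₀s⟩ :=
    (hblock.and_eventually (eventually_ge_atTop (s₀ + 2))).exists
  obtain ⟨n, rfl⟩ : ∃ n, s = n + 2 := ⟨s - 2, by omega⟩
  have hq : (0 : ℝ) < cfDen t (n + 2) := Nat.cast_pos.2 (cfDen_pos ht _)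
  have hs₀q : max (Real.exp H) ((M + 1) / c) ≤ cfDen t (n + 2) :=
    hs₀.trans (Nat.cast_le.2 (by linarith [le_cfDen ht (n + 2)]))
  have hlog : 2 * κ * Real.log (cfDen t (n + 2)) ≤ l * Real.log ω := by
    refine (mul_le_mul_of_nonneg_left (log_cfDen_le_mul_of_le ht hM hKl) ?_).trans_eq ?_
    · positivity
    rw [hκ]
    field_simp
  have hlarge : t (n + 2) + 1 ≤ c * cfDen t (n + 2) := by
    rw [mul_comm, ← div_le_iff₀ hc]
    refine le_trans ?_ ((le_max_right _ _).trans hs₀q)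
    gcongr
    exact hM _ (by omega)
  obtain ⟨A, hA⟩ := exists_approximant_of_const_block hT hN hω hirr ht hα hs hl hlog hlarge
  exact ⟨A, hA ▸ (Real.le_log_iff_exp_le hq).2 ((le_max_left _ _).trans hs₀q)⟩

end ConstantBlocks

section AlternatingBlocks

lemma exists_eventually_sum_le_mul_of_lt_liminf {x : ℕ → ℝ} (hx : ∀ n, 1 ≤ n → 0 < x n) {r : ℝ}
    (hr : 1 < r) (hliminf : r < liminf (fun n ↦ x (n + 1) / x n) atTop) :
    ∃ K, ∀ᶠ n in atTop, ∑ k ∈ Finset.Icc 1 n, x k ≤ K * x (n + 1) := by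
  have hbdd : IsBoundedUnder (· ≥ ·) atTop fun n ↦ x (n + 1) / x n :=
    isBoundedUnder_of_eventually_ge (a := 0) <| (eventually_ge_atTop 1).mono fun n hn ↦
      (div_pos (hx _ n.succ_pos) (hx n hn)).le
  obtain ⟨N, hN⟩ := eventually_atTop.1 <|
    (eventually_lt_of_lt_liminf hliminf hbdd).and (eventually_ge_atTop 1)
  have hgrowth {n : ℕ} (hn : N ≤ n) : r * x n ≤ x (n + 1) :=
    ((lt_div_iff₀ (hx n (hN n hn).2)).1 (hN n hn).1).le
  have hr0 : 0 < r - 1 := sub_pos.2 hr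
  set K := max (r / (r - 1)) ((∑ k ∈ Finset.Icc 1 N, x k) / x N)
  have hK0 : 0 ≤ K := le_max_of_le_left (by positivity)
  have hK : K + r ≤ K * r := by
    have := (div_le_iff₀ hr0).1 (le_max_left (r / (r - 1)) ((∑ k ∈ Finset.Icc 1 N, x k) / x N))
    linarith
  have hsum {n : ℕ} (hn : N ≤ n) : ∑ k ∈ Finset.Icc 1 n, x k ≤ K * x n := by
    induction n, hn using Nat.le_induction with
    | base => exact (div_le_iff₀ (hx N (hN N le_rfl).2)).1 (le_max_right _ _)
    | succ n hn ih =>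
      rw [Finset.sum_Icc_succ_top (by omega)]
      refine le_of_mul_le_mul_right ?_ (one_pos.trans hr)
      calc (∑ k ∈ Finset.Icc 1 n, x k + x (n + 1)) * r ≤ (K * x n + x (n + 1)) * r := by gcongr
        _ = K * (r * x n) + r * x (n + 1) := by ring
        _ ≤ K * x (n + 1) + r * x (n + 1) := by
          linarith [mul_le_mul_of_nonneg_left (hgrowth hn) hK0]
        _ = (K + r) * x (n + 1) := by ring
        _ ≤ K * r * x (n + 1) := by
          gcongr
          exact (hx (n + 1) n.succ_pos).le
        _ = K * x (n + 1) * r := by ring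
  refine ⟨K, eventually_atTop.2 ⟨N, fun n hn ↦ ?_⟩⟩
  calc ∑ k ∈ Finset.Icc 1 n, x k ≤ ∑ k ∈ Finset.Icc 1 (n + 1), x k :=
        Finset.sum_le_sum_of_subset_of_nonneg (Finset.Icc_subset_Icc_right n.le_succ)
          fun k hk _ ↦ (hx k (Finset.mem_Icc.1 hk).1).le
    _ ≤ K * x (n + 1) := hsum (hn.trans n.le_succ)

variable {lam : ℕ → ℕ}

lemma strictMono_sum_Icc (hlam : ∀ n, 1 ≤ n → 1 ≤ lam n) :
    StrictMono fun n ↦ ∑ k ∈ Finset.Icc 1 n, lam k := by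
  refine strictMono_nat_of_lt_succ fun n ↦ ?_
  rw [Finset.sum_Icc_succ_top (by omega)]
  exact Nat.lt_add_of_pos_right (hlam _ n.succ_pos)

lemma exists_lt_and_le_succ {S : ℕ → ℕ} (hS : StrictMono S) {i : ℕ} (hi : S 0 < i) :
    ∃ n, S n < i ∧ i ≤ S (n + 1) := by
  have hex : ∃ n, i ≤ S (n + 1) := ⟨i, (Nat.le_succ i).trans hS.le_apply⟩
  refine ⟨Nat.find hex, ?_, Nat.find_spec hex⟩
  rcases h : Nat.find hex with _ | m
  · exact hi
  · exact not_le.1 (Nat.find_min hex (h ▸ m.lt_succ_self))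

variable {a b : ℕ} {t : ℕ → ℕ} {α K : ℝ}

lemma eq_or_eq_of_blocks (hlam : ∀ n, 1 ≤ n → 1 ≤ lam n)
    (ht : ∀ n i : ℕ, (∑ k ∈ Finset.Icc 1 n, lam k) < i → i ≤ (∑ k ∈ Finset.Icc 1 (n + 1), lam k) →
      t i = if Even n then a else b) {i : ℕ} (hi : 1 ≤ i) : t i = a ∨ t i = b := by
  obtain ⟨n, hn, hn'⟩ := exists_lt_and_le_succ (strictMono_sum_Icc hlam) hi
  rw [ht n i hn hn']
  exact ite_eq_or_eq _ _ _

lemma transcendental_of_frequently_block_eq (ha : 0 < a) (hb : 0 < b) (hab : a ≠ b)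
    (hlam : ∀ n, 1 ≤ n → 1 ≤ lam n)
    (ht : ∀ n i : ℕ, (∑ k ∈ Finset.Icc 1 n, lam k) < i → i ≤ (∑ k ∈ Finset.Icc 1 (n + 1), lam k) →
      t i = if Even n then a else b)
    (hα : Tendsto (fun n => (cfNum t n : ℝ) / cfDen t n) atTop (𝓝 α)) {c : ℕ} (hc : 0 < c)
    (hfreq : ∃ᶠ n in atTop, (if Even n then a else b) = c ∧
      ∑ k ∈ Finset.Icc 1 n, (lam k : ℝ) ≤ K * lam (n + 1)) :
    Transcendental ℚ α := by
  have hS := strictMono_sum_Icc hlam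
  have hpos (i : ℕ) (hi : 1 ≤ i) : 0 < t i := by
    rcases eq_or_eq_of_blocks hlam ht hi with h | h <;> rwa [h]
  have hle (i : ℕ) (hi : 1 ≤ i) : t i ≤ max a b := by
    rcases eq_or_eq_of_blocks hlam ht hi with h | h <;> simp [h]
  refine transcendental_of_frequently_const_block hc hpos hle hα (K := K)
    (hS.tendsto_atTop.frequently ?_)
  refine (hfreq.and_eventually (eventually_ge_atTop 1)).mono ?_
  rintro n ⟨⟨rfl, hn⟩, hn1⟩
  refine ⟨lam (n + 1), ?_, mod_cast hn, fun i hi hi' ↦ ht n i hi ?_⟩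
  · obtain ⟨m, rfl⟩ := Nat.exists_eq_add_of_le' hn1
    rw [ht m _ (hS m.lt_succ_self) le_rfl]
    simp only [Nat.even_add_one]
    split_ifs <;> simp_all [eq_comm]
  · rwa [Finset.sum_Icc_succ_top (by omega)]

end AlternatingBlocks

end TwoPlaceRoth

theorem statement4_general (a b : ℕ) (ha : 0 < a) (hb : 0 < b) (hab : a ≠ b)
    (lam : ℕ → ℕ) (hlam : ∀ n, 1 ≤ n → 1 ≤ lam n)
    (t : ℕ → ℕ)
    (ht : ∀ n i : ℕ, (∑ k ∈ Finset.Icc 1 n, lam k) < i →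
      i ≤ (∑ k ∈ Finset.Icc 1 (n + 1), lam k) →
      t i = if Even n then a else b)
    (α : ℝ)
    (hα : Tendsto (fun n => (cfNum t n : ℝ) / cfDen t n) atTop (𝓝 α))
    (K : ℝ) (hK : ∃ᶠ n in atTop, ∑ k ∈ Finset.Icc 1 n, (lam k : ℝ) ≤ K * lam (n + 1)) :
    Transcendental ℚ α := by
  have hvalue : ∃ᶠ n in atTop,
      ((if Even n then a else b) = a ∧ ∑ k ∈ Finset.Icc 1 n, (lam k : ℝ) ≤ K * lam (n + 1)) ∨
      ((if Even n then a else b) = b ∧ ∑ k ∈ Finset.Icc 1 n, (lam k : ℝ) ≤ K * lam (n + 1)) :=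
    hK.mono fun n hn ↦ (ite_eq_or_eq _ _ _).imp (⟨·, hn⟩) (⟨·, hn⟩)
  rcases frequently_or_distrib.1 hvalue with h | h
  · exact TwoPlaceRoth.transcendental_of_frequently_block_eq ha hb hab hlam ht hα ha h
  · exact TwoPlaceRoth.transcendental_of_frequently_block_eq ha hb hab hlam ht hα hb h

/-- Theorem 4 (improving A. Baker): let `a ≠ b` be positive integers and let the
sequence of partial quotients of `α` consist alternately of `λ₁` copies of `a`, `λ₂`
copies of `b`, `λ₃` copies of `a`, etc. If `liminf λ_{n+1}/λ_n > √2`, then `α` is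
transcendental. -/
theorem statement4 (a b : ℕ) (ha : 0 < a) (hb : 0 < b) (hab : a ≠ b)
    (lam : ℕ → ℕ) (hlam : ∀ n, 1 ≤ n → 1 ≤ lam n)
    (t : ℕ → ℕ)
    (ht : ∀ n i : ℕ, (∑ k ∈ Finset.Icc 1 n, lam k) < i →
      i ≤ (∑ k ∈ Finset.Icc 1 (n + 1), lam k) →
      t i = if Even n then a else b)
    (α : ℝ)
    (hα : Tendsto (fun n => (cfNum t n : ℝ) / cfDen t n) atTop (𝓝 α))
    (hliminf : Real.sqrt 2 < liminf (fun n : ℕ => (lam (n + 1) : ℝ) / lam n) atTop) :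
    Transcendental ℚ α := by
  obtain ⟨K, hK⟩ := TwoPlaceRoth.exists_eventually_sum_le_mul_of_lt_liminf
    (fun n hn ↦ Nat.cast_pos.2 (hlam n hn)) Real.one_lt_sqrt_two hliminf
  exact statement4_general a b ha hb hab lam hlam t ht α hα K hK.frequently
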